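/- arXiv:math/0505563 — 3 statements merged into one kernel-verified Lean document; each statement's English description precedes it below -/
import Mathlib

section
/- For all positive integers n, k, r with r ≥ 2 and n ≥ rk, the chromatic number of the Kneser r-hypergraph K_{n,k}^r equals ⌈(n − rk + r)/(r − 1)⌉. That is, the minimal number m of colors such that there exists a coloring c of the k-element subsets of {1,…,n} with m colors for which no r pairwise disjoint k-element subsets all receive the same color, equals ⌈(n − rk + r)/(r − 1)⌉. -/
open Polynomial

/-!
For the lower bound, let `p` be prime and consider signed sets, that is, nonempty partial functions
from `V` to `ZMod p`. If there were no monochromatic hyperedge, a signed set whose parts are all too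
small to contain a `k`-set could be labelled by the average sign of a slice, and any other one by
the average sign of a slice of its color set, the set of pairs (color, sign) that occur in it.
Together with the sizes of these sets, the labels form an equivariant map from the order complex of
the signed sets to a join of `p (k - 1) + #C (p - 1)` copies of `ZMod p`, so that `#V` is at most
this number of copies by the `ZMod p`-Tucker lemma. The bound for `r` and the bound for `s` give the
one for `r s`, which reduces the general case to primes.

The Tucker lemma is proved by Smith theory. Adding one point to `V` at a time, cone off the current
cycle of signed sets and apply alternately `X - 1` and the norm `1 + X + ⋯ + X ^ (p - 1)`, where `X`
is the generator of the action. The image under the labelling always pairs to `1` with a normalized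
cochain, so it contains a simplex whose consecutive labels are distinct.

For the upper bound, split the ground set into classes of fewer than `r` points and one last class
of fewer than `r k` points, and color a `k`-set by the first class it meets.
-/

namespace AlonFranklLovasz

section Linear

variable {R ι M N : Type*} [CommRing R] [AddCommGroup M] [Module R M] [AddCommGroup N] [Module R N]

lemma supported_le_iff {S : Set ι} {W : Submodule R (ι →₀ R)} :
    Finsupp.supported R R S ≤ W ↔ ∀ i ∈ S, Finsupp.single i 1 ∈ W := by
  rw [Finsupp.supported_eq_span_single, Submodule.span_le, Set.image_subset_iff]
  rfl

lemma map_aeval_apply_of_mem {f : Module.End R M} {g : Module.End R N} {L : M →ₗ[R] N}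
    {W : Submodule R M} (hf : W ≤ W.comap f) (hL : ∀ x ∈ W, L (f x) = g (L x)) (P : R[X])
    {x : M} (hx : x ∈ W) : L (aeval f P x) = aeval g P (L x) := by
  induction P using Polynomial.induction_on' with
  | add P Q hP hQ => simp [hP, hQ]
  | monomial n a =>
    have hpow : (f ^ n) x ∈ W ∧ L ((f ^ n) x) = (g ^ n) (L x) := by
      induction n with
      | zero => simpa using hx
      | succ n ih =>
        simp only [pow_succ', Module.End.mul_apply]
        exact ⟨hf ih.1, by rw [hL _ ih.1, ih.2]⟩
    simp [aeval_monomial, hpow.2]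

end Linear

/-- Formal `R`-linear combinations of lists; the list `[a₀, …, aₙ]` plays the role of an ordered
simplex with vertices `a₀, …, aₙ`, and `[]` that of the empty simplex of the augmented complex. -/
abbrev ListChain (R α : Type*) [CommRing R] : Type _ := List α →₀ R

namespace ListChain

variable {R α β γ : Type*} [CommRing R]

/-- The cone over a chain, with apex `a`. -/
noncomputable def cons (a : α) : ListChain R α →ₗ[R] ListChain R α :=
  Finsupp.lmapDomain R R (List.cons a)

/-- The chain map induced by a map of vertices. -/
noncomputable def map (f : α → β) : ListChain R α →ₗ[R] ListChain R β :=
  Finsupp.lmapDomain R R (List.map f)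

/-- The alternating sum of the faces of a simplex. -/
noncomputable def listBoundary : List α → ListChain R α
  | [] => 0
  | a :: l => .single l 1 - cons a (listBoundary l)

/-- The boundary operator of the augmented ordered chain complex. -/
noncomputable def boundary : ListChain R α →ₗ[R] ListChain R α :=
  Finsupp.linearCombination R listBoundary

/-- The alternating sum of the lists `[a₀, …, aᵢ, u aᵢ, …, u aₙ]`. -/
noncomputable def listPrism (u : α → α) : List α → ListChain R α
  | [] => 0
  | a :: l => .single (a :: u a :: l.map u) 1 - cons a (listPrism u l)

/-- The prism operator, a chain homotopy from the identity to `map u`. -/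
noncomputable def prism (u : α → α) : ListChain R α →ₗ[R] ListChain R α :=
  Finsupp.linearCombination R (listPrism u)

/-- The contraction that pushes a chain along `u` and then cones it off at `v`. -/
noncomputable def contraction (u : α → α) (v : α) : ListChain R α →ₗ[R] ListChain R α :=
  cons v ∘ₗ map u - prism u

@[simp] lemma cons_single (a : α) (l : List α) (c : R) :
    cons a (.single l c) = .single (a :: l) c :=
  Finsupp.mapDomain_single

@[simp] lemma map_single (f : α → β) (l : List α) (c : R) :
    map f (.single l c) = .single (l.map f) c :=
  Finsupp.mapDomain_single

@[simp] lemma boundary_single (l : List α) :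
    boundary (.single l 1) = (listBoundary l : ListChain R α) := by
  simp [boundary]

@[simp] lemma prism_single (u : α → α) (l : List α) :
    prism u (.single l 1) = (listPrism u l : ListChain R α) := by
  simp [prism]

lemma map_map (f : β → γ) (g : α → β) (x : ListChain R α) : map f (map g x) = map (f ∘ g) x := by
  simp [map, ← Finsupp.mapDomain_comp, List.map_comp_map]

lemma map_id : map (R := R) (id : α → α) = LinearMap.id := by
  simp [map, Finsupp.lmapDomain_id]

lemma map_pow (f : α → α) (n : ℕ) : (map f : Module.End R (ListChain R α)) ^ n = map f^[n] := by
  induction n with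
  | zero => exact map_id.symm
  | succ n ih => exact LinearMap.ext fun x ↦ by simp [pow_succ, ih, map_map]

lemma map_cons (f : α → β) (a : α) (x : ListChain R α) :
    map f (cons a x) = cons (f a) (map f x) := by
  suffices map f ∘ₗ cons a = cons (R := R) (f a) ∘ₗ map f from LinearMap.congr_fun this x
  exact Finsupp.basisSingleOne.ext fun l ↦ by simp

lemma boundary_cons (a : α) (x : ListChain R α) :
    boundary (cons a x) = x - cons a (boundary x) := by
  suffices boundary ∘ₗ cons a = LinearMap.id - cons (R := R) a ∘ₗ boundary from
    LinearMap.congr_fun this x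
  exact Finsupp.basisSingleOne.ext fun l ↦ by simp [listBoundary]

lemma prism_cons (u : α → α) (a : α) (x : ListChain R α) :
    prism u (cons a x) = cons a (cons (u a) (map u x)) - cons a (prism u x) := by
  suffices prism u ∘ₗ cons a = cons (R := R) a ∘ₗ cons (u a) ∘ₗ map u - cons a ∘ₗ prism u from
    LinearMap.congr_fun this x
  exact Finsupp.basisSingleOne.ext fun l ↦ by simp [listPrism]

lemma boundary_boundary (x : ListChain R α) : boundary (boundary x) = 0 := by
  suffices boundary ∘ₗ boundary = (0 : Module.End R (ListChain R α)) from
    LinearMap.congr_fun this x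
  refine Finsupp.basisSingleOne.ext fun l ↦ ?_
  induction l with
  | nil => simp [listBoundary]
  | cons a l ih =>
    replace ih : boundary (listBoundary l : ListChain R α) = 0 := by simpa using ih
    simp [listBoundary, boundary_cons, ih]

lemma map_boundary (f : α → β) (x : ListChain R α) : map f (boundary x) = boundary (map f x) := by
  suffices map f ∘ₗ boundary = boundary (R := R) ∘ₗ map f from LinearMap.congr_fun this x
  refine Finsupp.basisSingleOne.ext fun l ↦ ?_
  induction l with
  | nil => simp [listBoundary]
  | cons a l ih => simp_all [listBoundary, map_cons]

lemma boundary_prism (u : α → α) (x : ListChain R α) :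
    boundary (prism u x) = map u x - x - prism u (boundary x) := by
  suffices boundary ∘ₗ prism u = map (R := R) u - LinearMap.id - prism u ∘ₗ boundary from
    LinearMap.congr_fun this x
  refine Finsupp.basisSingleOne.ext fun l ↦ ?_
  induction l with
  | nil => simp [listBoundary, listPrism]
  | cons a l ih =>
    simp only [Finsupp.coe_basisSingleOne, LinearMap.comp_apply, LinearMap.sub_apply,
      LinearMap.id_apply, prism_single, boundary_single, map_single] at ih ⊢
    simp only [listPrism, listBoundary, map_sub, boundary_single, boundary_cons, prism_single,
      prism_cons, ih, cons_single, List.map_cons]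
    have hmap : map u (listBoundary l) = (listBoundary (l.map u) : ListChain R α) := by
      rw [← boundary_single, map_boundary, map_single, boundary_single]
    rw [hmap]
    abel

lemma boundary_contraction (u : α → α) (v : α) (x : ListChain R α) :
    boundary (contraction u v x) = x - contraction u v (boundary x) := by
  simp only [contraction, LinearMap.sub_apply, LinearMap.comp_apply, map_sub, boundary_cons,
    boundary_prism, map_boundary]
  abel

section OrderedLists

variable [Preorder α] {s t : Set α} {n : ℕ} {a : α} {l : List α}

/-- The increasing lists of `n` elements of `s`, i.e. the ordered simplices of dimension `n - 1`
of the order complex of `s`, degenerate ones included. -/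
def orderedLists (s : Set α) (n : ℕ) : Set (List α) :=
  {l | l.length = n ∧ l.Pairwise (· ≤ ·) ∧ ∀ a ∈ l, a ∈ s}

lemma cons_mem_orderedLists :
    a :: l ∈ orderedLists s (n + 1) ↔ a ∈ s ∧ l ∈ orderedLists (s ∩ Set.Ici a) n := by
  simp only [orderedLists, Set.mem_ofPred_eq, List.length_cons, Nat.add_right_cancel_iff,
    List.pairwise_cons, List.forall_mem_cons, Set.mem_inter_iff, Set.mem_Ici, forall₂_and]
  tauto

lemma map_mem_orderedLists [Preorder β] {t : Set β} {f : α → β} (hf : Monotone f)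
    (hst : Set.MapsTo f s t) (hl : l ∈ orderedLists s n) : l.map f ∈ orderedLists t n := by
  obtain ⟨hn, hle, hs⟩ := hl
  refine ⟨by simpa, List.pairwise_map.2 (hle.imp fun h ↦ hf h), ?_⟩
  simpa using fun a ha ↦ hst (hs a ha)

lemma map_mem_supported_orderedLists [Preorder β] {t : Set β} {f : α → β} (hf : Monotone f)
    (hst : Set.MapsTo f s t) {x : ListChain R α}
    (hx : x ∈ Finsupp.supported R R (orderedLists s n)) :
    map f x ∈ Finsupp.supported R R (orderedLists t n) := by
  suffices Finsupp.supported R R (orderedLists s n)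
      ≤ (Finsupp.supported R R (orderedLists t n)).comap (map f) from this hx
  refine supported_le_iff.2 fun l hl ↦ ?_
  simpa using Finsupp.single_mem_supported R 1 (map_mem_orderedLists hf hst hl)

lemma cons_mem_supported_orderedLists (ha : a ∈ s) {x : ListChain R α}
    (hx : x ∈ Finsupp.supported R R (orderedLists (s ∩ Set.Ici a) n)) :
    cons a x ∈ Finsupp.supported R R (orderedLists s (n + 1)) := by
  suffices Finsupp.supported R R (orderedLists (s ∩ Set.Ici a) n)
      ≤ (Finsupp.supported R R (orderedLists s (n + 1))).comap (cons a) from this hx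
  refine supported_le_iff.2 fun l hl ↦ ?_
  simpa using Finsupp.single_mem_supported R 1 (cons_mem_orderedLists.2 ⟨ha, hl⟩)

lemma listPrism_mem_supported_orderedLists {u : α → α} (hu : Monotone u) (hle : ∀ a, a ≤ u a)
    (hst : s ⊆ t) (hmaps : Set.MapsTo u s t) (hl : l ∈ orderedLists s n) :
    (listPrism u l : ListChain R α) ∈ Finsupp.supported R R (orderedLists t (n + 1)) := by
  induction l generalizing s t n with
  | nil => exact zero_mem _
  | cons a l ih =>
    obtain rfl : l.length + 1 = n := hl.1
    obtain ⟨ha, hl⟩ := cons_mem_orderedLists.1 hl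
    have hmaps' : Set.MapsTo u (s ∩ Set.Ici a) (t ∩ Set.Ici a) := fun b hb ↦
      ⟨hmaps hb.1, hb.2.trans (hle b)⟩
    have hmaps'' : Set.MapsTo u (s ∩ Set.Ici a) (t ∩ Set.Ici a ∩ Set.Ici (u a)) := fun b hb ↦
      ⟨hmaps' hb, hu hb.2⟩
    refine sub_mem (Finsupp.single_mem_supported R 1 ?_) (cons_mem_supported_orderedLists (hst ha)
      (ih (Set.inter_subset_inter_left _ hst) hmaps' hl))
    exact cons_mem_orderedLists.2 ⟨hst ha, cons_mem_orderedLists.2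
      ⟨⟨hmaps ha, hle a⟩, map_mem_orderedLists hu hmaps'' hl⟩⟩

lemma contraction_mem_supported_orderedLists {u : α → α} {v : α} (hu : Monotone u)
    (hle : ∀ a, a ≤ u a) (hv : ∀ a, v ≤ u a) (hst : s ⊆ t) (hmaps : Set.MapsTo u s t)
    (hvt : v ∈ t) {x : ListChain R α} (hx : x ∈ Finsupp.supported R R (orderedLists s n)) :
    contraction u v x ∈ Finsupp.supported R R (orderedLists t (n + 1)) := by
  have hmaps' : Set.MapsTo u s (t ∩ Set.Ici v) := fun a ha ↦ ⟨hmaps ha, hv a⟩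
  refine sub_mem (cons_mem_supported_orderedLists hvt
    (map_mem_supported_orderedLists hu hmaps' hx)) ?_
  suffices Finsupp.supported R R (orderedLists s n)
      ≤ (Finsupp.supported R R (orderedLists t (n + 1))).comap (prism u) from this hx
  refine supported_le_iff.2 fun l hl ↦ ?_
  simpa using listPrism_mem_supported_orderedLists hu hle hst hmaps hl

end OrderedLists

/-- A cochain is normalized if it vanishes on the degenerate simplices, which are the lists with
two equal consecutive entries. -/
def IsNormalized (φ : ListChain R α →ₗ[R] R) : Prop :=
  ∀ l : List α, ¬ l.IsChain (· ≠ ·) → φ (.single l 1) = 0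

lemma IsNormalized.comp_boundary {φ : ListChain R α →ₗ[R] R} (hφ : IsNormalized φ) :
    IsNormalized (φ ∘ₗ boundary) := by
  have isNormalized_comp_cons {ψ : ListChain R α →ₗ[R] R} (hψ : IsNormalized ψ) (a : α) :
      IsNormalized (ψ ∘ₗ cons a) := fun l hl ↦ by
    simpa using hψ (a :: l) fun h ↦ hl h.tail
  intro l hl
  induction l generalizing φ with
  | nil => simp at hl
  | cons a l ih =>
    by_cases hl' : l.IsChain (· ≠ ·)
    · obtain ⟨l, rfl⟩ : ∃ l', l = a :: l' := by
        cases l with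
        | nil => simp at hl
        | cons b l => exact ⟨l, by grind⟩
      have comp_cons_cons : φ ∘ₗ cons a ∘ₗ cons a = 0 :=
        Finsupp.basisSingleOne.ext fun l ↦ by simpa using hφ (a :: a :: l) (by simp)
      simpa [listBoundary] using LinearMap.congr_fun comp_cons_cons (listBoundary l)
    · simpa [listBoundary, hφ l hl'] using ih (isNormalized_comp_cons hφ a) hl'

section Action

/-- The action of a polynomial in one variable on chains, the variable acting as `map f`. For a
map `f` of period `p`, the Smith theory operators are the actions of `X - 1` and
`∑ i ∈ Finset.range p, X ^ i`. -/
noncomputable def action (f : α → α) (P : R[X]) : ListChain R α →ₗ[R] ListChain R α :=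
  aeval (map f : Module.End R (ListChain R α)) P

lemma boundary_action (f : α → α) (P : R[X]) (x : ListChain R α) :
    boundary (action f P x) = action f P (boundary x) :=
  map_aeval_apply_of_mem (W := ⊤) (fun _ _ ↦ trivial) (fun x _ ↦ (map_boundary f x).symm) P trivial

lemma action_action (f : α → α) (P Q : R[X]) (x : ListChain R α) :
    action f P (action f Q x) = action f (P * Q) x := by
  simp [action]

lemma action_X_pow_sub_one {f : α → α} {p : ℕ} (hf : f^[p] = id) (x : ListChain R α) :
    action f (X ^ p - 1) x = 0 := by
  simp [action, map_pow, hf, map_id]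

lemma action_X_sub_one_single (f : α → α) (l : List α) :
    action f (X - 1) (.single l 1) = (.single (l.map f) 1 - .single l 1 : ListChain R α) := by
  simp [action]

lemma action_geom_sum_single (f : α → α) (p : ℕ) (l : List α) :
    action f (∑ i ∈ Finset.range p, X ^ i) (.single l 1) =
      (∑ i ∈ Finset.range p, .single (l.map f^[i]) 1 : ListChain R α) := by
  simp [action, map_pow]

end Action

section DualExact

variable {p : ℕ}

/-- Exactness of `· ∘ₗ action Q` followed by `· ∘ₗ action P` on the normalized cochains of `ZMod p`
that vanish on the empty simplex, where polynomials act through the translation by `1`. -/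
def DualExact (p : ℕ) (P Q : R[X]) : Prop :=
  ∀ ψ : ListChain R (ZMod p) →ₗ[R] R, IsNormalized ψ → ψ (.single [] 1) = 0 →
    ψ ∘ₗ action (· + 1) P = 0 → ∃ η, IsNormalized η ∧ η ∘ₗ action (· + 1) Q = ψ

lemma apply_single_map_add {ψ : ListChain R (ZMod p) →ₗ[R] R} [NeZero p]
    (hψ : ψ ∘ₗ action (· + 1) (X - 1) = 0) (l : List (ZMod p)) (c : ZMod p) :
    ψ (.single (l.map (· + c)) 1) = ψ (.single l 1) := by
  have apply_map_add_one (l : List (ZMod p)) :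
      ψ (.single (l.map (· + 1)) 1) = ψ (.single l 1) := by
    simpa [action_X_sub_one_single, sub_eq_zero] using LinearMap.congr_fun hψ (.single l 1)
  rw [← ZMod.natCast_zmod_val c]
  induction c.val with
  | zero => simp
  | succ n ih =>
    rw [← ih, ← apply_map_add_one (l.map (· + (n : ZMod p)))]
    simp [Function.comp_def, add_assoc]

lemma sum_range_natCast_zmod {M : Type*} [AddCommMonoid M] [NeZero p] (F : ZMod p → M) :
    ∑ i ∈ Finset.range p, F i = ∑ c, F c :=
  Finset.sum_nbij' (fun i ↦ (i : ZMod p)) ZMod.val (by simp) (by simp [ZMod.val_lt])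
    (fun i hi ↦ ZMod.val_cast_of_lt (Finset.mem_range.1 hi)) (by simp) (by simp)

lemma action_geom_sum_single_zmod [NeZero p] (l : List (ZMod p)) :
    action (· + 1) (∑ i ∈ Finset.range p, X ^ i) (.single l 1) =
      (∑ c : ZMod p, .single (l.map (· + c)) 1 : ListChain R (ZMod p)) := by
  rw [action_geom_sum_single, ← sum_range_natCast_zmod]
  simp [add_right_iterate]

lemma dualExact_X_sub_one_geom_sum [NeZero p] :
    DualExact p (X - 1) (∑ i ∈ Finset.range p, X ^ i : R[X]) := by
  intro ψ hψ hψ₀ hψ₁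
  refine ⟨Finsupp.linearCombination R fun l ↦ if l.head? = some 0 then ψ (.single l 1) else 0,
    fun l hl ↦ by simp [hψ l hl], Finsupp.basisSingleOne.ext fun l ↦ ?_⟩
  cases l with
  | nil => simp [action_geom_sum_single_zmod, hψ₀]
  | cons a l =>
    simp [action_geom_sum_single_zmod, apply_single_map_add hψ₁, add_eq_zero_iff_neg_eq,
      -List.map_cons]

lemma sum_range_val_add_one {M : Type*} [AddCommMonoid M] [NeZero p] {F : ℕ → M}
    (hF : ∑ i ∈ Finset.range p, F i = 0) (c : ZMod p) :
    ∑ i ∈ Finset.range (c + 1).val, F i = ∑ i ∈ Finset.range (c.val + 1), F i := by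
  have val_add_one : (c + 1).val = (c.val + 1) % p := by
    rw [← ZMod.val_natCast]
    simp
  obtain h | h := (Nat.succ_le_of_lt c.val_lt).lt_or_eq
  · rw [val_add_one, Nat.mod_eq_of_lt h]
  · rw [val_add_one, ← Nat.succ_eq_add_one, h, hF, Nat.mod_self, Finset.sum_range_zero]

lemma dualExact_geom_sum_X_sub_one [NeZero p] :
    DualExact p (∑ i ∈ Finset.range p, X ^ i : R[X]) (X - 1) := by
  intro ψ hψ hψ₀ hψ₁
  -- Every orbit of nonempty lists is cut at the lists whose head is `0`.
  let e : List (ZMod p) → R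
    | [] => 0
    | a :: l => -∑ i ∈ Finset.range (-a).val, ψ (.single ((a :: l).map (· + (i : ZMod p))) 1)
  refine ⟨Finsupp.linearCombination R e, fun l hl ↦ ?_, Finsupp.basisSingleOne.ext fun l ↦ ?_⟩
  · have apply_map_add (c : ZMod p) : ψ (.single (l.map (· + c)) 1) = 0 :=
      hψ _ (by simpa [List.isChain_map] using hl)
    cases l <;> simp_all [e]
  · cases l with
    | nil => simp [action_X_sub_one_single, hψ₀]
    | cons a l =>
      let F (i : ℕ) : R := ψ (.single ((a :: l).map (· + (i : ZMod p))) 1)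
      have sum_F : ∑ i ∈ Finset.range p, F i = 0 := by
        rw [sum_range_natCast_zmod fun c ↦ ψ (.single ((a :: l).map (· + c)) 1)]
        simpa [action_geom_sum_single_zmod] using LinearMap.congr_fun hψ₁ (.single (a :: l) 1)
      have e_map : e ((a :: l).map (· + 1)) =
          -∑ i ∈ Finset.range (-(a + 1)).val, F (i + 1) := by
        simp [e, F, Function.comp_def, add_comm, add_left_comm]
      have e_eq : e (a :: l) = - ∑ i ∈ Finset.range ((-(a + 1)).val + 1), F i := by
        rw [← sum_range_val_add_one sum_F]
        simp [e, F]
      have F_zero : F 0 = ψ (.single (a :: l) 1) := by simp [F]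
      simp [action_X_sub_one_single, -List.map_cons, e_map, e_eq, Finset.sum_range_succ', F_zero]

end DualExact

end ListChain

section SignedSets

variable {ι : Type*} {p : ℕ} {V W : Finset ι} {A : Finset (ι × ZMod p)}

/-- The generator of the action of `ZMod p` on sets of pairs `(i, g)`, where `g` is the sign
of `i`. -/
def rotate : Finset (ι × ZMod p) → Finset (ι × ZMod p) :=
  Finset.map ((Equiv.refl ι).prodCongr (Equiv.addRight 1)).toEmbedding

lemma mem_rotate {a : ι × ZMod p} : a ∈ rotate A ↔ (a.1, a.2 - 1) ∈ A := by
  simp [rotate, Finset.mem_map_equiv, sub_eq_add_neg, Prod.map]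

lemma rotate_mono : Monotone (rotate : Finset (ι × ZMod p) → _) :=
  fun _ _ ↦ Finset.map_subset_map.2

lemma rotate_nonempty : (rotate A).Nonempty ↔ A.Nonempty :=
  Finset.map_nonempty

lemma card_rotate (A : Finset (ι × ZMod p)) : (rotate A).card = A.card :=
  Finset.card_map _

lemma mem_iterate_rotate {n : ℕ} {a : ι × ZMod p} : a ∈ rotate^[n] A ↔ (a.1, a.2 - n) ∈ A := by
  induction n generalizing a with
  | zero => simp
  | succ n ih => simp [Function.iterate_succ_apply', mem_rotate, ih, sub_sub, add_comm]

lemma iterate_rotate_self : (rotate : Finset (ι × ZMod p) → _)^[p] = id := by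
  ext A a
  simp [mem_iterate_rotate]

/-- The nonempty partial functions from `V` to `ZMod p`, encoded as their graphs. These signed
sets are ordered by inclusion. -/
def signedSets (p : ℕ) (V : Finset ι) : Set (Finset (ι × ZMod p)) :=
  {A | A.Nonempty ∧ Set.InjOn Prod.fst (A : Set (ι × ZMod p)) ∧ ∀ a ∈ A, a.1 ∈ V}

lemma signedSets_mono (h : V ⊆ W) : signedSets p V ⊆ signedSets p W :=
  fun _ hA ↦ ⟨hA.1, hA.2.1, fun a ha ↦ h (hA.2.2 a ha)⟩

lemma rotate_mem_signedSets (hA : A ∈ signedSets p V) : rotate A ∈ signedSets p V := by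
  refine ⟨rotate_nonempty.2 hA.1, fun a ha b hb hab ↦ ?_,
    fun a ha ↦ hA.2.2 (a.1, a.2 - 1) (mem_rotate.1 ha)⟩
  exact Prod.ext hab <| sub_left_injective <| congrArg Prod.snd <|
    hA.2.1 (mem_rotate.1 ha) (mem_rotate.1 hb) hab

lemma singleton_mem_signedSets {v : ι} (hv : v ∈ V) (g : ZMod p) : {(v, g)} ∈ signedSets p V :=
  ⟨Finset.singleton_nonempty _, by simp, by simpa⟩

lemma insert_mem_signedSets [DecidableEq ι] {v : ι} (hv : v ∉ V) (g : ZMod p)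
    (hA : A ∈ signedSets p V) :
    insert (v, g) A ∈ signedSets p (insert v V) := by
  refine ⟨Finset.insert_nonempty _ _, ?_, ?_⟩
  · rw [Finset.coe_insert, Set.injOn_insert fun h ↦ hv (hA.2.2 _ h)]
    exact ⟨hA.2.1, fun ⟨a, ha, hav⟩ ↦ hv (by simpa [hav] using hA.2.2 a ha)⟩
  · simp only [Finset.forall_mem_insert, Finset.mem_insert_self, true_and]
    exact fun a ha ↦ Finset.mem_insert_of_mem (hA.2.2 a ha)

end SignedSets

section Tucker

open ListChain

variable {R ι : Type*} [CommRing R] {p : ℕ} {P Q : R[X]} {V : Finset ι} {v : ι}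
  {lam : Finset (ι × ZMod p) → ZMod p}

/-- A labelling of the signed sets that commutes with the actions of `ZMod p`. -/
def IsEquivariantOn (lam : Finset (ι × ZMod p) → ZMod p) (V : Finset ι) : Prop :=
  ∀ A ∈ signedSets p V, lam (rotate A) = lam A + 1

lemma map_action_rotate (hlam : IsEquivariantOn lam V) (P : R[X]) {n : ℕ}
    {x : ListChain R (Finset (ι × ZMod p))}
    (hx : x ∈ Finsupp.supported R R (orderedLists (signedSets p V) n)) :
    map lam (action rotate P x) = action (· + 1) P (map lam x) := by
  refine map_aeval_apply_of_mem (fun x hx ↦ map_mem_supported_orderedLists rotate_mono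
    (fun A hA ↦ rotate_mem_signedSets hA) hx) (fun x hx ↦ ?_) P hx
  suffices Finsupp.supported R R (orderedLists (signedSets p V) n)
      ≤ LinearMap.eqLocus (map lam ∘ₗ map rotate) (map (· + 1) ∘ₗ map lam) from this hx
  refine supported_le_iff.2 fun l hl ↦ ?_
  have map_rotate : (l.map rotate).map lam = (l.map lam).map (· + 1) := by
    simpa using fun A hA ↦ hlam A (hl.2.2 A hA)
  simp only [LinearMap.mem_eqLocus, LinearMap.comp_apply, map_single, map_rotate]

lemma action_rotate_mem_supported (P : R[X]) {n : ℕ} {x : ListChain R (Finset (ι × ZMod p))}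
    (hx : x ∈ Finsupp.supported R R (orderedLists (signedSets p V) n)) :
    action rotate P x ∈ Finsupp.supported R R (orderedLists (signedSets p V) n) :=
  aeval_apply_smul_mem_of_le_comap hx P _ fun _ ↦ map_mem_supported_orderedLists rotate_mono
    fun _ ↦ rotate_mem_signedSets

/-- A nonzero pairing between the image under `lam` of a cycle of signed sets killed by `Q` and
a normalized cochain whose image under `P` is a cocycle. -/
def HasObstruction (lam : Finset (ι × ZMod p) → ZMod p) (P Q : R[X]) (V : Finset ι) : Prop :=
  ∃ z ∈ Finsupp.supported R R (orderedLists (signedSets p V) V.card),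
    boundary z = 0 ∧ action rotate Q z = 0 ∧
      ∃ η : ListChain R (ZMod p) →ₗ[R] R,
        IsNormalized η ∧ η ∘ₗ action (· + 1) P ∘ₗ boundary = 0 ∧ η (map lam z) = 1

lemma hasObstruction_empty [CharP R p] (lam : Finset (ι × ZMod p) → ZMod p) :
    HasObstruction lam (∑ i ∈ Finset.range p, X ^ i : R[X]) (X - 1) ∅ := by
  refine ⟨.single [] 1, Finsupp.single_mem_supported R 1 (by simp [orderedLists]),
    by simp [listBoundary], by simp [action_X_sub_one_single], Finsupp.lapply [],
    fun l hl ↦ by cases l <;> simp_all, ?_, by simp⟩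
  have lapply_nil_comp_action : Finsupp.lapply [] ∘ₗ
      action (· + 1 : ZMod p → ZMod p) (∑ i ∈ Finset.range p, X ^ i : R[X]) = 0 := by
    refine Finsupp.basisSingleOne.ext fun l ↦ ?_
    cases l <;> simp [action_geom_sum_single]
  rw [← LinearMap.comp_assoc, lapply_nil_comp_action, LinearMap.zero_comp]

lemma hasObstruction_insert [DecidableEq ι] (h : HasObstruction lam P Q V)
    (hPQ : P * Q = X ^ p - 1) (hexact : DualExact p P Q) (hv : v ∉ V)
    (hlam : IsEquivariantOn lam (insert v V)) : HasObstruction lam Q P (insert v V) := by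
  obtain ⟨z, hz, hz₀, hQz, η, hη, hPη, hηz⟩ := h
  obtain ⟨η', hη', hη'Q⟩ := hexact (η ∘ₗ boundary) hη.comp_boundary (by simp [listBoundary]) <|
    LinearMap.ext fun x ↦ by
      simpa [boundary_action] using LinearMap.congr_fun hPη x
  let c := contraction (insert (v, 0)) {(v, 0)} z
  have hc : c ∈ Finsupp.supported R R (orderedLists (signedSets p (insert v V)) (V.card + 1)) :=
    contraction_mem_supported_orderedLists (fun _ _ ↦ Finset.insert_subset_insert _)
      (fun _ ↦ Finset.subset_insert _ _) (by simp) (signedSets_mono (Finset.subset_insert _ _))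
      (fun _ ↦ insert_mem_signedSets hv 0)
      (singleton_mem_signedSets (Finset.mem_insert_self _ _) 0) hz
  have boundary_c : boundary c = z := by simp [c, boundary_contraction, hz₀]
  refine ⟨action rotate Q c, ?_, ?_, ?_, η', hη', ?_, ?_⟩
  · rw [Finset.card_insert_of_notMem hv]
    exact action_rotate_mem_supported Q hc
  · rw [boundary_action, boundary_c, hQz]
  · rw [action_action, hPQ, action_X_pow_sub_one iterate_rotate_self]
  · rw [← LinearMap.comp_assoc, hη'Q]
    exact LinearMap.ext fun x ↦ by simp [boundary_boundary]
  · calc η' (map lam (action rotate Q c)) = (η' ∘ₗ action (· + 1) Q) (map lam c) := by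
          rw [map_action_rotate hlam Q hc, LinearMap.comp_apply]
      _ = η (map lam (boundary c)) := by rw [hη'Q, LinearMap.comp_apply, map_boundary]
      _ = 1 := by rw [boundary_c, hηz]

lemma HasObstruction.exists_isChain_ne [Nontrivial R] (h : HasObstruction lam P Q V) :
    ∃ l ∈ orderedLists (signedSets p V) V.card, (l.map lam).IsChain (· ≠ ·) := by
  obtain ⟨z, hz, -, -, η, hη, -, hηz⟩ := h
  by_contra! hl
  suffices Finsupp.supported R R (orderedLists (signedSets p V) V.card)
      ≤ LinearMap.ker (η ∘ₗ map lam) by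
    have : η (map lam z) = 0 := this hz
    simp [hηz] at this
  exact supported_le_iff.2 fun l hl' ↦ by simpa using hη _ (hl l hl')

/-- The combinatorial `ZMod p`-Tucker lemma. -/
theorem exists_orderedList_isChain_ne [Fact (1 < p)] (hlam : IsEquivariantOn lam V) :
    ∃ l ∈ orderedLists (signedSets p V) V.card, (l.map lam).IsChain (· ≠ ·) := by
  have : NeZero p := ⟨(zero_lt_one.trans Fact.out).ne'⟩
  suffices HasObstruction lam (∑ i ∈ Finset.range p, X ^ i : (ZMod p)[X]) (X - 1) V ∨
      HasObstruction lam (X - 1 : (ZMod p)[X]) (∑ i ∈ Finset.range p, X ^ i) V from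
    this.elim HasObstruction.exists_isChain_ne HasObstruction.exists_isChain_ne
  classical
  induction V using Finset.induction_on with
  | empty => exact .inl (hasObstruction_empty lam)
  | insert v V hv ih =>
    obtain h | h := ih fun A hA ↦ hlam A (signedSets_mono (Finset.subset_insert v V) hA)
    · exact .inr (hasObstruction_insert h (geom_sum_mul _ _) dualExact_geom_sum_X_sub_one hv hlam)
    · exact .inl (hasObstruction_insert h (mul_geom_sum _ _) dualExact_X_sub_one_geom_sum hv hlam)

/-- `lam` and `rank` describe an equivariant simplicial map to the join of `M` copies of `ZMod p`.
-/
lemma card_le_of_isEquivariantOn [Fact (1 < p)] {M : ℕ}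
    {rank : Finset (ι × ZMod p) → ℕ} (hlam : IsEquivariantOn lam V)
    (rank_lt : ∀ A ∈ signedSets p V, ∀ B ∈ signedSets p V, A ⊆ B → lam A ≠ lam B →
      rank A < rank B)
    (rank_mem : ∀ A ∈ signedSets p V, rank A ∈ Finset.Icc 1 M) : V.card ≤ M := by
  obtain ⟨l, ⟨hlen, hle, hl⟩, hne⟩ := exists_orderedList_isChain_ne hlam
  have strictly_increasing : (l.map rank).Pairwise (· < ·) := by
    rw [← List.isChain_iff_pairwise, List.isChain_map, List.isChain_iff_getElem]
    rw [List.isChain_map, List.isChain_iff_getElem] at hne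
    rw [← List.isChain_iff_pairwise, List.isChain_iff_getElem] at hle
    exact fun i hi ↦ rank_lt _ (hl _ (by simp)) _ (hl _ (by simp)) (hle i hi) (hne i hi)
  have nodup : (l.map rank).Nodup := strictly_increasing.imp ne_of_lt
  calc V.card = (l.map rank).toFinset.card := by
        rw [List.toFinset_card_of_nodup nodup, List.length_map, hlen]
    _ ≤ (Finset.Icc 1 M).card := Finset.card_le_card fun x hx ↦ by
        obtain ⟨A, hA, rfl⟩ := List.mem_map.1 (List.mem_toFinset.1 hx)
        exact rank_mem A (hl A hA)
    _ = M := by simp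

end Tucker

section Sign

variable {ι : Type*} {p : ℕ} {A : Finset (ι × ZMod p)}

/-- The average of the signs in a set whose size is prime to `p`. -/
def averageSign [Fact p.Prime] (A : Finset (ι × ZMod p)) : ZMod p :=
  (∑ a ∈ A, a.2) / A.card

lemma averageSign_rotate [Fact p.Prime] (hA : A.Nonempty) (hp : A.card < p) :
    averageSign (rotate A) = averageSign A + 1 := by
  have card_ne_zero : (A.card : ZMod p) ≠ 0 := fun h ↦
    hp.not_ge (Nat.le_of_dvd hA.card_pos ((ZMod.natCast_eq_zero_iff _ _).1 h))
  have sum_rotate : ∑ a ∈ rotate A, a.2 = ∑ a ∈ A, a.2 + A.card := by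
    simp [rotate, Finset.sum_add_distrib]
  rw [averageSign, averageSign, sum_rotate, card_rotate, add_div, div_self card_ne_zero]

variable [DecidableEq ι]

/-- The part of a signed set lying over `i`. -/
def slice (A : Finset (ι × ZMod p)) (i : ι) : Finset (ι × ZMod p) :=
  {a ∈ A | a.1 = i}

lemma slice_rotate (A : Finset (ι × ZMod p)) (i : ι) : slice (rotate A) i = rotate (slice A i) := by
  ext a
  simp [slice, mem_rotate]

lemma card_slice_le_one {V : Finset ι} (hA : A ∈ signedSets p V) (i : ι) :
    (slice A i).card ≤ 1 := by
  refine Finset.card_le_one.2 fun a ha b hb ↦ ?_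
  rw [slice, Finset.mem_filter] at ha hb
  exact hA.2.1 ha.1 hb.1 (ha.2.trans hb.2.symm)

lemma slice_nonempty {a : ι × ZMod p} (ha : a ∈ A) : (slice A a.1).Nonempty :=
  ⟨a, Finset.mem_filter.2 ⟨ha, rfl⟩⟩

lemma exists_equivariant_sign (ι : Type*) [DecidableEq ι] (p : ℕ) [Fact p.Prime] :
    ∃ sgn : Finset (ι × ZMod p) → ZMod p, ∀ A,
      (∃ i, (slice A i).Nonempty ∧ (slice A i).card < p) → sgn (rotate A) = sgn A + 1 := by
  obtain _ | _ := isEmpty_or_nonempty ι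
  · exact ⟨0, fun A ⟨i, _⟩ ↦ isEmptyElim i⟩
  -- The chosen index depends only on a rotation invariant predicate.
  let index (A : Finset (ι × ZMod p)) : ι :=
    Classical.epsilon fun i ↦ (slice A i).Nonempty ∧ (slice A i).card < p
  refine ⟨fun A ↦ averageSign (slice A (index A)), fun A hA ↦ ?_⟩
  have index_rotate : index (rotate A) = index A := by
    simp [index, slice_rotate, rotate_nonempty, card_rotate]
  obtain ⟨hne, hlt⟩ := Classical.epsilon_spec hA
  simp only [index_rotate, slice_rotate]
  exact averageSign_rotate hne hlt

end Sign

/-- Pairwise disjoint `k`-subsets `f i` of `V` which all have color `a`, i.e. a monochromatic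
hyperedge of the Kneser hypergraph on `V`. -/
structure IsMonochromaticMatching {α γ ρ : Type*} (c : Finset α → γ) (k : ℕ) (V : Finset α) (a : γ)
    (f : ρ → Finset α) : Prop where
  pairwise_disjoint : Pairwise (Function.onFun Disjoint f)
  mem_powersetCard : ∀ i, f i ∈ V.powersetCard k
  color_eq : ∀ i, c (f i) = a

/-- The lower bound on the number of colors for the Kneser `r`-hypergraph of a finite set `V`:
if `#C < (#V - r * k + r) / (r - 1)`, then every coloring with colors in `C` has a monochromatic
hyperedge. -/
def KneserLowerBound (α γ : Type*) (r : ℕ) : Prop :=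
  ∀ ⦃k : ℕ⦄ ⦃V : Finset α⦄ ⦃C : Finset γ⦄ ⦃c : Finset α → γ⦄, 0 < k →
    (∀ s ∈ V.powersetCard k, c s ∈ C) → r * k + C.card * (r - 1) < V.card + r →
      ∃ a, ∃ f : Fin r → Finset α, IsMonochromaticMatching c k V a f

section Prime

variable {α γ : Type*} [DecidableEq α] {p k : ℕ} {V : Finset α}
  {A B : Finset (α × ZMod p)} {g h : ZMod p}

/-- The elements of a signed set with sign `g`. -/
def part (A : Finset (α × ZMod p)) (g : ZMod p) : Finset α :=
  {a ∈ A | a.2 = g}.image Prod.fst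

lemma mem_part {x : α} : x ∈ part A g ↔ (x, g) ∈ A := by
  simp [part]

lemma part_rotate (A : Finset (α × ZMod p)) (g : ZMod p) : part (rotate A) g = part A (g - 1) := by
  ext x
  simp [mem_part, mem_rotate]

lemma part_mono (hAB : A ⊆ B) (g : ZMod p) : part A g ⊆ part B g := fun _ hx ↦
  mem_part.2 (hAB (mem_part.1 hx))

lemma part_subset (hA : A ∈ signedSets p V) (g : ZMod p) : part A g ⊆ V := fun _ hx ↦
  hA.2.2 _ (mem_part.1 hx)

lemma disjoint_part (hA : A ∈ signedSets p V) (hgh : g ≠ h) :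
    Disjoint (part A g) (part A h) :=
  Finset.disjoint_left.2 fun _ hg hh ↦
    hgh (congrArg Prod.snd (hA.2.1 (mem_part.1 hg) (mem_part.1 hh) rfl))

lemma sum_card_part [NeZero p] (A : Finset (α × ZMod p)) : ∑ g, (part A g).card = A.card := by
  rw [Finset.card_eq_sum_card_fiberwise (f := Prod.snd) (t := Finset.univ) (by simp)]
  refine Finset.sum_congr rfl fun g _ ↦ Finset.card_image_of_injOn fun a ha b hb hab ↦ ?_
  simp only [Finset.coe_filter, Set.mem_ofPred_eq] at ha hb
  exact Prod.ext hab (ha.2.trans hb.2.symm)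

/-- A signed set is small if none of its parts contains a `k`-set. -/
def IsSmall (k : ℕ) (A : Finset (α × ZMod p)) : Prop :=
  ∀ g, (part A g).card < k

lemma isSmall_rotate : IsSmall k (rotate A) ↔ IsSmall k A := by
  simp only [IsSmall, part_rotate]
  exact (Equiv.subRight (1 : ZMod p)).forall_congr_right (q := fun g ↦ (part A g).card < k)

lemma IsSmall.anti (hB : IsSmall k B) (hAB : A ⊆ B) : IsSmall k A := fun g ↦
  (Finset.card_le_card (part_mono hAB g)).trans_lt (hB g)

lemma IsSmall.card_le [NeZero p] (hA : IsSmall k A) : A.card ≤ p * (k - 1) := by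
  rw [← sum_card_part]
  refine (Finset.sum_le_card_nsmul _ _ (k - 1) fun g _ ↦ Nat.le_sub_one_of_lt (hA g)).trans_eq ?_
  simp

variable [DecidableEq γ] [NeZero p] {c : Finset α → γ} {C : Finset γ}

/-- The pairs `(a, g)` such that some `k`-subset of the part of sign `g` has color `a`. -/
def colorSet (c : Finset α → γ) (k : ℕ) (A : Finset (α × ZMod p)) : Finset (γ × ZMod p) :=
  Finset.univ.biUnion fun g ↦ ((part A g).powersetCard k).image fun s ↦ (c s, g)

lemma mem_colorSet {b : γ × ZMod p} :
    b ∈ colorSet c k A ↔ ∃ s ∈ (part A b.2).powersetCard k, c s = b.1 := by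
  simp [colorSet, Prod.ext_iff]

lemma colorSet_rotate (c : Finset α → γ) (k : ℕ) (A : Finset (α × ZMod p)) :
    colorSet c k (rotate A) = rotate (colorSet c k A) := by
  ext b
  simp only [mem_colorSet, part_rotate, mem_rotate]

lemma colorSet_mono (hAB : A ⊆ B) : colorSet c k A ⊆ colorSet c k B := fun b hb ↦ by
  obtain ⟨s, hs, hcs⟩ := mem_colorSet.1 hb
  exact mem_colorSet.2 ⟨s, Finset.powersetCard_mono (part_mono hAB _) hs, hcs⟩

lemma colorSet_nonempty (hA : ¬ IsSmall k A) : (colorSet c k A).Nonempty := by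
  obtain ⟨g, hg⟩ : ∃ g, k ≤ (part A g).card := by simpa [IsSmall] using hA
  obtain ⟨s, hs⟩ := Finset.powersetCard_nonempty.2 hg
  exact ⟨(c s, g), mem_colorSet.2 ⟨s, hs, rfl⟩⟩

lemma card_slice_colorSet_lt (hA : A ∈ signedSets p V) (a : γ)
    (hc : ∀ f : ZMod p → Finset α, ¬ IsMonochromaticMatching c k V a f) :
    (slice (colorSet c k A) a).card < p := by
  obtain ⟨g, hg⟩ : ∃ g, (a, g) ∉ colorSet c k A := by
    by_contra! hall
    simp only [mem_colorSet, Finset.mem_powersetCard] at hall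
    choose f hf hcf using hall
    exact hc f
      { pairwise_disjoint := fun g h hgh ↦ (disjoint_part hA hgh).mono (hf g).1 (hf h).1
        mem_powersetCard := fun g ↦
          Finset.mem_powersetCard.2 ⟨(hf g).1.trans (part_subset hA g), (hf g).2⟩
        color_eq := hcf }
  calc (slice (colorSet c k A) a).card < ({a} ×ˢ (Finset.univ : Finset (ZMod p))).card := by
        refine Finset.card_lt_card (Finset.ssubset_iff.2 ⟨(a, g), by simp [slice, hg], ?_⟩)
        simp +contextual [Finset.subset_iff, slice]
    _ = p := by simp

lemma card_colorSet_le (hA : A ∈ signedSets p V) (hcC : ∀ s ∈ V.powersetCard k, c s ∈ C)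
    (hc : ∀ a, ∀ f : ZMod p → Finset α, ¬ IsMonochromaticMatching c k V a f) :
    (colorSet c k A).card ≤ C.card * (p - 1) := by
  rw [mul_comm]
  refine Finset.card_le_mul_card_image_of_maps_to (f := Prod.fst) (fun b hb ↦ ?_) _
    fun a _ ↦ Nat.le_sub_one_of_lt (card_slice_colorSet_lt hA a (hc a))
  obtain ⟨s, hs, hcs⟩ := mem_colorSet.1 hb
  exact hcs ▸ hcC s (Finset.powersetCard_mono (part_subset hA _) hs)

end Prime

section PrimeBound

variable {α γ : Type*} {p k : ℕ} {V : Finset α} {C : Finset γ} {c : Finset α → γ}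

lemma card_le_of_forall_not_isMonochromaticMatching [Fact p.Prime]
    (hcC : ∀ s ∈ V.powersetCard k, c s ∈ C)
    (hc : ∀ a, ∀ f : ZMod p → Finset α, ¬ IsMonochromaticMatching c k V a f) :
    V.card ≤ p * (k - 1) + C.card * (p - 1) := by
  classical
  have hp : p.Prime := Fact.out
  have : Fact (1 < p) := ⟨hp.one_lt⟩
  obtain ⟨sgn, sgn_rotate⟩ := exists_equivariant_sign α p
  obtain ⟨colorSgn, colorSgn_rotate⟩ := exists_equivariant_sign γ p
  let lam (A : Finset (α × ZMod p)) : ZMod p :=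
    if IsSmall k A then sgn A else colorSgn (colorSet c k A)
  let rank (A : Finset (α × ZMod p)) : ℕ :=
    if IsSmall k A then A.card else p * (k - 1) + (colorSet c k A).card
  have lam_rotate : IsEquivariantOn lam V := fun A hA ↦ by
    by_cases hs : IsSmall k A
    · obtain ⟨a, ha⟩ := hA.1
      simpa [lam, isSmall_rotate, hs] using sgn_rotate A
        ⟨a.1, slice_nonempty ha, (card_slice_le_one hA _).trans_lt hp.one_lt⟩
    · obtain ⟨a, ha⟩ := colorSet_nonempty (c := c) hs
      simpa [lam, isSmall_rotate, hs, colorSet_rotate] using colorSgn_rotate (colorSet c k A)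
        ⟨a.1, slice_nonempty ha, card_slice_colorSet_lt hA _ (hc _)⟩
  have rank_lt : ∀ A ∈ signedSets p V, ∀ B ∈ signedSets p V, A ⊆ B → lam A ≠ lam B →
      rank A < rank B := fun A _ B _ hAB hne ↦ by
    by_cases hA : IsSmall k A <;> by_cases hB : IsSmall k B <;>
      simp only [lam, rank, hA, hB, if_true, if_false] at hne ⊢
    · exact Finset.card_lt_card (hAB.ssubset_of_ne (ne_of_apply_ne sgn hne))
    · exact hA.card_le.trans_lt (Nat.lt_add_of_pos_right (colorSet_nonempty hB).card_pos)
    · exact absurd (hB.anti hAB) hA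
    · exact Nat.add_lt_add_left (Finset.card_lt_card
        ((colorSet_mono hAB).ssubset_of_ne (ne_of_apply_ne colorSgn hne))) _
  refine card_le_of_isEquivariantOn lam_rotate rank_lt fun A hA ↦ Finset.mem_Icc.2 ?_
  by_cases hs : IsSmall k A <;> simp only [rank, hs, if_true, if_false]
  · exact ⟨hA.1.card_pos, hs.card_le.trans (Nat.le_add_right _ _)⟩
  · exact ⟨(colorSet_nonempty hs).card_pos.trans_le (Nat.le_add_left _ _),
      Nat.add_le_add_left (card_colorSet_le hA hcC hc) _⟩

end PrimeBound

section LowerBound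

variable {α γ ρ σ : Type*} {k r s : ℕ} {V : Finset α} {c : Finset α → γ} {a : γ}

lemma IsMonochromaticMatching.comp_injective {f : ρ → Finset α}
    (hf : IsMonochromaticMatching c k V a f) {e : σ → ρ} (he : e.Injective) :
    IsMonochromaticMatching c k V a (f ∘ e) where
  pairwise_disjoint := fun _ _ hij ↦ hf.pairwise_disjoint (he.ne hij)
  mem_powersetCard := fun i ↦ hf.mem_powersetCard (e i)
  color_eq := fun i ↦ hf.color_eq (e i)

lemma IsMonochromaticMatching.prod {k' : ℕ} {c' : Finset α → γ} {F : σ → Finset α}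
    (hF : IsMonochromaticMatching c' k' V a F) {f : σ → ρ → Finset α}
    (hf : ∀ j, IsMonochromaticMatching c k (F j) (c' (F j)) (f j)) :
    IsMonochromaticMatching c k V a fun x : σ × ρ ↦ f x.1 x.2 where
  pairwise_disjoint := by
    rintro ⟨j, i⟩ ⟨j', i'⟩ hne
    obtain rfl | hj := eq_or_ne j j'
    · exact (hf j).pairwise_disjoint (by simpa using hne)
    · exact (hF.pairwise_disjoint hj).mono
        (Finset.mem_powersetCard.1 ((hf j).mem_powersetCard i)).1
        (Finset.mem_powersetCard.1 ((hf j').mem_powersetCard i')).1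
  mem_powersetCard := fun x ↦ Finset.powersetCard_mono
    (Finset.mem_powersetCard.1 (hF.mem_powersetCard x.1)).1 ((hf x.1).mem_powersetCard x.2)
  color_eq := fun x ↦ ((hf x.1).color_eq x.2).trans (hF.color_eq x.1)

lemma kneserLowerBound_of_prime {p : ℕ} (hp : p.Prime) : KneserLowerBound α γ p := by
  intro k V C c hk hcC hcard
  have : Fact p.Prime := ⟨hp⟩
  obtain ⟨a, f, hf⟩ : ∃ a, ∃ f : ZMod p → Finset α, IsMonochromaticMatching c k V a f := by
    by_contra! hc
    have := card_le_of_forall_not_isMonochromaticMatching hcC hc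
    have := Nat.mul_sub_one p k
    have := Nat.le_mul_of_pos_right p hk
    omega
  have e : Fin p ≃ ZMod p := Fintype.equivOfCardEq (by simp)
  exact ⟨a, _, hf.comp_injective e.injective⟩

lemma kneserLowerBound_one : KneserLowerBound α γ 1 := by
  intro k V _ c _ _ hcard
  obtain ⟨s, hs⟩ := Finset.powersetCard_nonempty.2 (show k ≤ V.card by omega)
  exact ⟨c s, fun _ ↦ s, Subsingleton.pairwise, fun _ ↦ hs, fun _ ↦ rfl⟩

/-- A set of size `k'` just large enough for the bound for `r` receives the color of some
monochromatic `r`-matching inside it, and the bound for `s` applies to this coloring. -/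
lemma KneserLowerBound.mul (hr₀ : 0 < r) (hs₀ : 0 < s) (hr : KneserLowerBound α γ r)
    (hs : KneserLowerBound α γ s) : KneserLowerBound α γ (r * s) := by
  intro k V C c hk hcC hcard
  obtain ⟨r, rfl⟩ := Nat.exists_eq_add_one.2 hr₀
  obtain ⟨s, rfl⟩ := Nat.exists_eq_add_one.2 hs₀
  obtain ⟨k, rfl⟩ := Nat.exists_eq_add_one.2 hk
  let k' := C.card * r + (r + 1) * k + 1
  have exists_color (W : Finset α) : ∃ a, W ∈ V.powersetCard k' →
      a ∈ C ∧ ∃ f : Fin (r + 1) → Finset α, IsMonochromaticMatching c (k + 1) W a f := by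
    by_cases hW : W ∈ V.powersetCard k'
    · obtain ⟨hWV, hWk⟩ := Finset.mem_powersetCard.1 hW
      have hcC' : ∀ s ∈ W.powersetCard (k + 1), c s ∈ C := fun s hs ↦
        hcC s (Finset.powersetCard_mono hWV hs)
      obtain ⟨a, f, hf⟩ := hr hk hcC' (by rw [hWk]; simp only [k', add_tsub_cancel_right]; linarith)
      exact ⟨a, fun _ ↦ ⟨hf.color_eq 0 ▸ hcC' _ (hf.mem_powersetCard 0), f, hf⟩⟩
    · exact ⟨c W, fun h ↦ absurd h hW⟩
  choose c' hc' using exists_color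
  have mul_sub_one : (r + 1) * (s + 1) - 1 = r * s + r + s := Nat.sub_eq_of_eq_add (by ring)
  rw [mul_sub_one] at hcard
  obtain ⟨a, F, hF⟩ := hs (Nat.succ_pos _) (fun W hW ↦ (hc' W hW).1)
    (by simp only [add_tsub_cancel_right]; linarith)
  choose f hf using fun j ↦ (hc' (F j) (hF.mem_powersetCard j)).2
  exact ⟨a, _, (hF.prod hf).comp_injective
    (finProdFinEquiv.symm.trans (Equiv.prodComm _ _)).injective⟩

lemma kneserLowerBound (hr : 0 < r) : KneserLowerBound α γ r := by
  induction r using induction_on_primes with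
  | zero => exact absurd hr (lt_irrefl 0)
  | one => exact kneserLowerBound_one
  | prime_mul q r hq ih =>
    have hr : 0 < r := Nat.pos_of_mul_pos_left hr
    exact (kneserLowerBound_of_prime hq).mul hq.pos hr (ih hr)

end LowerBound

section ChromaticNumber

variable {α ρ : Type*} {k r m : ℕ}

/-- The Kneser `r`-hypergraph of the `k`-subsets of `α` has a proper coloring with `m` colors. -/
def KneserColorable (α : Type*) (k r m : ℕ) : Prop :=
  ∃ c : {s : Finset α // s.card = k} → Fin m,
    ∀ f : Fin r → {s : Finset α // s.card = k},
      (∀ i j, i ≠ j → Disjoint (f i : Finset α) (f j : Finset α)) → ∃ i j, c (f i) ≠ c (f j)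

lemma KneserColorable.card_add_le [Fintype α] (h : KneserColorable α k r m) (hk : 0 < k)
    (hr : 0 < r) : Fintype.card α + r ≤ m * (r - 1) + r * k := by
  obtain ⟨c, hc⟩ := h
  by_contra! hlt
  let color (s : Finset α) : ℕ := if hs : s.card = k then c ⟨s, hs⟩ else 0
  have color_mem : ∀ s ∈ Finset.univ.powersetCard k, color s ∈ Finset.range m := fun s hs ↦ by
    simp [color, (Finset.mem_powersetCard.1 hs).2]
  obtain ⟨a, f, hf⟩ := kneserLowerBound hr hk color_mem
    (by rw [Finset.card_univ, Finset.card_range]; omega)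
  have card_f (i : Fin r) : (f i).card = k := (Finset.mem_powersetCard.1 (hf.mem_powersetCard i)).2
  obtain ⟨i, j, hij⟩ := hc (fun i ↦ ⟨f i, card_f i⟩) fun _ _ hij ↦ hf.pairwise_disjoint hij
  refine hij (Fin.ext ?_)
  simpa [color, card_f] using (hf.color_eq i).trans (hf.color_eq j).symm

lemma exists_map_fin_card_fiber_le (α : Type*) [Fintype α] {q : ℕ} (hq : 0 < q) (m : ℕ) :
    ∃ g : α → Fin (m + 1), (∀ a ≠ Fin.last m, Finset.card {x | g x = a} ≤ q) ∧
      Finset.card {x | g x = Fin.last m} ≤ Fintype.card α - m * q := by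
  let e := Fintype.equivFin α
  have e_injOn (S : Set α) : S.InjOn fun x ↦ (e x : ℕ) :=
    (Fin.val_injective.comp e.injective).injOn
  refine ⟨fun x ↦ ⟨min (e x / q) m, by omega⟩, fun a ha ↦ ?_, ?_⟩
  · calc _ ≤ (Finset.Ico (a * q) (a * q + q)).card := by
          refine Finset.card_le_card_of_injOn _ (fun x hx ↦ ?_) (e_injOn _)
          have : (a : ℕ) ≠ m := fun h ↦ ha (Fin.ext h)
          have : (e x : ℕ) / q = a := by
            simp only [Finset.coe_filter, Fin.ext_iff, Set.mem_ofPred_eq] at hx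
            omega
          have := (Nat.div_eq_iff hq).1 this
          simp only [Finset.coe_Ico, Set.mem_Ico]
          omega
      _ = q := by simp
  · calc _ ≤ (Finset.Ico (m * q) (Fintype.card α)).card := by
          refine Finset.card_le_card_of_injOn _ (fun x hx ↦ ?_) (e_injOn _)
          simpa [Fin.ext_iff, Nat.le_div_iff_mul_le hq] using hx
      _ = Fintype.card α - m * q := by simp

lemma card_mul_le_card_of_le_card_inter [DecidableEq α] [Fintype ρ] {f : ρ → Finset α}
    {t : Finset α} {n : ℕ} (hf : Pairwise (Function.onFun Disjoint f))
    (hn : ∀ i, n ≤ (f i ∩ t).card) : Fintype.card ρ * n ≤ t.card := by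
  calc Fintype.card ρ * n ≤ ∑ i, (f i ∩ t).card := by
        simpa using Finset.card_nsmul_le_sum Finset.univ _ n fun i _ ↦ hn i
    _ = (Finset.univ.biUnion fun i ↦ f i ∩ t).card := by
        refine (Finset.card_biUnion fun i _ j _ hij ↦ ?_).symm
        exact (hf hij).mono Finset.inter_subset_left Finset.inter_subset_left
    _ ≤ t.card := Finset.card_le_card (Finset.biUnion_subset.2 fun _ _ ↦ Finset.inter_subset_right)

/-- A `k`-set is colored by the least value on it of a map to `Fin m` with fibers of size less
than `r`, except for the last one, which has size less than `r * k`. -/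
lemma kneserColorable_of_card_add_le [Fintype α] (hk : 0 < k) (hr : 2 ≤ r)
    (hn : r * k < Fintype.card α + r) (hm : Fintype.card α + r ≤ m * (r - 1) + r * k) :
    KneserColorable α k r m := by
  classical
  obtain ⟨m, rfl⟩ : ∃ m', m = m' + 1 := Nat.exists_eq_add_one.2 (Nat.pos_of_ne_zero fun h ↦ by
    rw [h] at hm
    omega)
  obtain ⟨g, card_fiber, card_last_fiber⟩ :=
    exists_map_fin_card_fiber_le α (Nat.sub_pos_of_lt hr) m
  let fiber (a : Fin (m + 1)) : Finset α := {x | g x = a}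
  have hne (s : {s : Finset α // s.card = k}) : s.1.Nonempty := Finset.card_pos.1 (s.2.symm ▸ hk)
  refine ⟨fun s ↦ s.1.inf' (hne s) g, fun f hf ↦ ?_⟩
  by_contra! hmono
  obtain ⟨a, ha⟩ : ∃ a, ∀ i, (f i).1.inf' (hne (f i)) g = a :=
    ⟨_, fun i ↦ hmono i ⟨0, by omega⟩⟩
  obtain rfl | hlast := eq_or_ne a (Fin.last m)
  · have inter_fiber (i : Fin r) : (f i).1 ∩ fiber (Fin.last m) = f i :=
      Finset.inter_eq_left.2 fun x hx ↦ by
        simpa [fiber] using Fin.last_le_iff.1 ((ha i).symm.le.trans (Finset.inf'_le g hx))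
    have := card_mul_le_card_of_le_card_inter (fun i j ↦ hf i j) fun i ↦
      (congrArg Finset.card (inter_fiber i)).trans (f i).2 |>.ge
    have : (fiber (Fin.last m)).card ≤ Fintype.card α - m * (r - 1) := card_last_fiber
    have : 0 < r * k := by positivity
    rw [Fintype.card_fin, add_one_mul] at *
    omega
  · have inter_fiber_nonempty (i : Fin r) : ((f i).1 ∩ fiber a).Nonempty := by
      obtain ⟨x, hx, hgx⟩ := Finset.exists_mem_eq_inf' (hne (f i)) g
      exact ⟨x, by simp [fiber, hx, ← hgx, ha]⟩
    have := card_mul_le_card_of_le_card_inter (fun i j ↦ hf i j) fun i ↦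
      (inter_fiber_nonempty i).card_pos
    have : (fiber a).card ≤ r - 1 := card_fiber a hlast
    rw [Fintype.card_fin] at *
    omega

lemma kneserColorable_iff [Fintype α] (hk : 0 < k) (hr : 2 ≤ r)
    (hn : r * k < Fintype.card α + r) :
    KneserColorable α k r m ↔ Fintype.card α + r ≤ m * (r - 1) + r * k :=
  ⟨fun h ↦ h.card_add_le hk (by omega), kneserColorable_of_card_add_le hk hr hn⟩

end ChromaticNumber

end AlonFranklLovasz

open AlonFranklLovasz in
theorem alon_frankl_lovasz_general (α : Type*) [Fintype α] (k r : ℕ) (hk : 0 < k) (hr : 2 ≤ r)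
    (hn : r * k < Fintype.card α + r) :
    ((sInf {m : ℕ | KneserColorable α k r m} : ℕ) : ℤ)
      = ⌈(((Fintype.card α : ℚ) - r * k + r) / (r - 1))⌉ := by
  set x : ℚ := ((Fintype.card α : ℚ) - r * k + r) / (r - 1) with hx
  have hr' : (0 : ℚ) < r - 1 := by
    rw [sub_pos]
    exact_mod_cast hr
  have x_nonneg : 0 ≤ x := by
    have : (r * k : ℚ) < Fintype.card α + r := by exact_mod_cast hn
    exact div_nonneg (by linarith) hr'.le
  have setOf_colorable : {m : ℕ | KneserColorable α k r m} = Set.Ici ⌈x⌉₊ := by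
    ext m
    rw [Set.mem_ofPred_eq, kneserColorable_iff hk hr hn, Set.mem_Ici, Nat.ceil_le, hx,
      div_le_iff₀ hr', ← @Nat.cast_le ℚ]
    push_cast [Nat.cast_sub (show 1 ≤ r by omega)]
    constructor <;> intro h <;> linarith
  rw [setOf_colorable, csInf_Ici, Int.natCast_ceil_eq_ceil x_nonneg]

/-- **Alon–Frankl–Lovász theorem**: for positive integers `n, k, r` with `r ≥ 2` and
`n ≥ rk`, the chromatic number of the Kneser `r`-hypergraph `K_{n,k}^r` — the minimal
number `m` of colors such that there is a coloring of the `k`-element subsets of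
`{1,…,n}` with `m` colors for which no `r` pairwise disjoint `k`-element subsets all
receive the same color — equals `⌈(n - rk + r)/(r - 1)⌉`. -/
theorem alon_frankl_lovasz (n k r : ℕ) (hk : 0 < k) (hr : 2 ≤ r) (hn : r * k ≤ n) :
    ((sInf {m : ℕ | ∃ c : {s : Finset (Fin n) // s.card = k} → Fin m,
        ∀ f : Fin r → {s : Finset (Fin n) // s.card = k},
          (∀ i j, i ≠ j → Disjoint (f i : Finset (Fin n)) (f j : Finset (Fin n))) →
            ∃ i j, c (f i) ≠ c (f j)} : ℕ) : ℤ)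
      = ⌈(((n : ℚ) - r * k + r) / (r - 1))⌉ := by
  have h := alon_frankl_lovasz_general (Fin n) k r hk hr (by rw [Fintype.card_fin]; omega)
  rwa [Fintype.card_fin] at h
end

section
/- Let T and G be two finite simple graphs such that χ(T) ≥ 3, there exists a graph homomorphism from T to G, and there is no graph homomorphism from G to T. Then there exists a finite simple graph H such that there exist graph homomorphisms from T to H and from H to G, but there is no graph homomorphism from H to T and no graph homomorphism from G to H. -/
/-!
Since `G ↛ T`, some connected component `C` of `G` satisfies `C ↛ T`, and `C` has an odd closed
walk because every bipartite graph maps to an edge of `T`. Choose `F` with no odd closed walk of at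
most that length and no proper colouring by the functions `C → T`, and put `H = T + (C × F)`. A
homomorphism `G → H` would send the connected graph `C` into `T` or into `C × F`; the latter
projects to `F`, which has no short odd closed walk. A homomorphism `C × F → T` assigns a function
`C → T` to each vertex of `F`; some two adjacent vertices of `F` receive the same function, and that
function is then a homomorphism `C → T`.

Shift graphs on long tuples serve as `F`: proper colourings of them by few colours would force an
injection of the ground set into an iterated power set of the set of colours.
-/

open SimpleGraph

universe u v

section ShiftGraph

variable {k : ℕ} {N : Type*} [Preorder N]

/-- The arcs of the shift digraph on increasing `(k + 1)`-tuples, `(s₀, …, sₖ) → (s₁, …, sₖ₊₁)`. -/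
def ShiftArc (x y : Fin (k + 1) → N) : Prop :=
  ∃ s : Fin (k + 2) → N, StrictMono s ∧ Fin.init s = x ∧ Fin.tail s = y

theorem ShiftArc.strictMono_left {x y : Fin (k + 1) → N} (h : ShiftArc x y) : StrictMono x := by
  obtain ⟨s, hs, rfl, -⟩ := h
  exact hs.comp Fin.strictMono_castSucc

theorem ShiftArc.strictMono_right {x y : Fin (k + 1) → N} (h : ShiftArc x y) : StrictMono y := by
  obtain ⟨s, hs, -, rfl⟩ := h
  exact hs.comp Fin.strictMono_succ

theorem ShiftArc.apply_succ {x y : Fin (k + 1) → N} (h : ShiftArc x y) (i : Fin k) :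
    x i.succ = y i.castSucc := by
  obtain ⟨s, -, rfl, rfl⟩ := h
  rfl

theorem not_shiftArc_self (x : Fin (k + 1) → N) : ¬ ShiftArc x x := by
  rintro ⟨s, hs, rfl, h⟩
  exact (hs (Fin.castSucc_lt_succ (i := 0))).ne' (congrFun h 0)

theorem shiftArc_of_init_eq_tail {x y : Fin (k + 2) → N} (hx : StrictMono x) (hy : StrictMono y)
    (h : Fin.init y = Fin.tail x) : ShiftArc x y := by
  have hxy : x 0 < y 0 := by
    simpa only [← show y 0 = x 1 from congrFun h 0] using hx (Fin.zero_lt_one (n := k))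
  refine ⟨Matrix.vecCons (x 0) y, hy.vecCons hxy, funext (Fin.cases rfl fun i => ?_), rfl⟩
  exact congrFun h i

variable (k N) in
/-- The shift graph on the increasing `(k + 1)`-tuples of `N`. All tuples are vertices; those that
are not increasing are isolated. -/
def shiftGraph : SimpleGraph (Fin (k + 1) → N) where
  Adj x y := ShiftArc x y ∨ ShiftArc y x
  symm := ⟨fun _ _ => Or.symm⟩
  loopless := ⟨fun x h => not_shiftArc_self x (h.elim id id)⟩

theorem strictMono_of_shiftGraph_adj {x y : Fin (k + 1) → N} (h : (shiftGraph k N).Adj x y) :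
    StrictMono x :=
  h.elim ShiftArc.strictMono_left ShiftArc.strictMono_right

-- `f` and `b` count the forward and backward arcs of the walk.
theorem exists_apply_add_eq_of_shiftGraph_walk {x y : Fin (k + 1) → N}
    (w : (shiftGraph k N).Walk x y) :
    ∃ f b : ℕ, f + b = w.length ∧
      ∀ j (_ : j + f + b ≤ k), x ⟨j + f, by omega⟩ = y ⟨j + b, by omega⟩ := by
  induction w with
  | nil => exact ⟨0, 0, rfl, fun _ _ => rfl⟩
  | cons hadj w ih =>
    obtain ⟨f, b, hlen, hxy⟩ := ih
    rw [Walk.length_cons]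
    rcases hadj with harc | harc
    · refine ⟨f + 1, b, by omega, fun j hj => ?_⟩
      exact (harc.apply_succ ⟨j + f, by omega⟩).trans (hxy j (by omega))
    · refine ⟨f, b + 1, by omega, fun j hj => ?_⟩
      have hshift := hxy (j + 1) (by omega)
      simp only [Nat.add_right_comm j 1] at hshift
      exact (harc.apply_succ ⟨j + f, by omega⟩).symm.trans hshift

theorem even_length_of_shiftGraph_closed_walk {x : Fin (k + 1) → N}
    (w : (shiftGraph k N).Walk x x) (hw : w.length ≤ k) : Even w.length := by
  obtain ⟨f, b, hlen, hx⟩ := exists_apply_add_eq_of_shiftGraph_walk w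
  cases w with
  | nil => exact Even.zero
  | cons hadj w =>
    have hfb := (strictMono_of_shiftGraph_adj hadj).injective (hx 0 (by omega))
    rw [Fin.mk.injEq] at hfb
    exact ⟨f, by omega⟩

end ShiftGraph

theorem exists_injective_of_shiftGraph_coloring {N : Type*} [LinearOrder N] {k : ℕ} {C : Type u}
    (c : (shiftGraph k N).Coloring C) : ∃ f : N → Set^[k] C, Function.Injective f := by
  induction k generalizing C with
  | zero =>
    refine ⟨fun x => c ![x], Function.Injective.of_lt_imp_ne fun x y hxy => c.valid (Or.inl ?_)⟩
    refine ⟨![x, y], by simpa using hxy, ?_, rfl⟩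
    ext i
    fin_cases i
    rfl
  | succ k ih =>
    -- Colour a tuple by the set of colours of its one-step extensions.
    have hne : ∀ {x y}, ShiftArc x y → c '' {s | StrictMono s ∧ Fin.init s = x} ≠
        c '' {s | StrictMono s ∧ Fin.init s = y} := by
      rintro x y ⟨s, hs, hx, rfl⟩ heq
      obtain ⟨t, ⟨ht, hts⟩, hct⟩ : c s ∈ c '' {t | StrictMono t ∧ Fin.init t = Fin.tail s} :=
        heq ▸ ⟨s, ⟨hs, hx⟩, rfl⟩
      exact c.valid (Or.inl (shiftArc_of_init_eq_tail hs ht hts)) hct.symm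
    exact ih (Coloring.mk (fun x => c '' {s | StrictMono s ∧ Fin.init s = x})
      fun hadj => hadj.elim hne fun harc => (hne harc).symm)

theorem finite_iterate_set {C : Type u} [Finite C] (k : ℕ) : Finite (Set^[k] C) := by
  induction k generalizing C with
  | zero => exact ‹Finite C›
  | succ _ ih => exact ih (C := Set C)

theorem not_injective_iterate_set {C : Type u} (k : ℕ) (f : Set^[k + 1] C → Set^[k] C) :
    ¬ Function.Injective f := by
  induction k generalizing C with
  | zero => exact Function.cantor_injective f
  | succ _ ih => exact ih (C := Set C) f

theorem exists_isEmpty_coloring_and_even_short_closed_walks (C : Type u) (k : ℕ) :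
    ∃ (X : Type u) (F : SimpleGraph X), (Finite C → Finite X) ∧ IsEmpty (F.Coloring C) ∧
      ∀ x (w : F.Walk x x), w.length ≤ k → Even w.length := by
  classical
  let _ : LinearOrder (Set^[k + 1] C) := linearOrderOfSTO WellOrderingRel
  refine ⟨Fin (k + 1) → Set^[k + 1] C, shiftGraph k _, fun _ => ?_, ⟨fun c => ?_⟩,
    fun _ => even_length_of_shiftGraph_closed_walk⟩
  · have := finite_iterate_set (C := C) (k + 1)
    infer_instance
  · obtain ⟨f, hf⟩ := exists_injective_of_shiftGraph_coloring c
    exact not_injective_iterate_set k f hf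

section Hom

variable {U V W : Type*} {T : SimpleGraph V} {G : SimpleGraph W} {F : SimpleGraph U}

/-- The tensor (or categorical) product of graphs, the product in the category of graphs and
homomorphisms. -/
def tensorProd (G : SimpleGraph W) (F : SimpleGraph U) : SimpleGraph (W × U) where
  Adj p q := G.Adj p.1 q.1 ∧ F.Adj p.2 q.2
  symm := ⟨fun _ _ => And.imp Adj.symm Adj.symm⟩
  loopless := ⟨fun _ h => G.irrefl h.1⟩

/-- The first projection of a tensor product. -/
def tensorProd.fst : tensorProd G F →g G := ⟨Prod.fst, And.left⟩

/-- The second projection of a tensor product. -/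
def tensorProd.snd : tensorProd G F →g F := ⟨Prod.snd, And.right⟩

/-- The homomorphism out of a disjoint sum given by a homomorphism on each summand. -/
def homSumElim (f : T →g G) (g : F →g G) : T ⊕g F →g G where
  toFun := Sum.elim f g
  map_rel' {x y} h := by
    rcases x with x | x <;> rcases y with y | y
    · exact f.map_adj (sum_adj_inl.mp h)
    · exact absurd h (not_adj_sum_inl_inr x y)
    · exact absurd h.symm (not_adj_sum_inl_inr y x)
    · exact g.map_adj (sum_adj_inr.mp h)

theorem nonempty_hom_of_tensorProd_hom (hF : IsEmpty (F.Coloring (W → V)))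
    (f : tensorProd G F →g T) : Nonempty (G →g T) := by
  by_contra hGT
  refine hF.false (Coloring.mk (fun x v => f (v, x)) fun {x y} hxy heq => hGT ?_)
  refine ⟨⟨fun v => f (v, x), fun {v v'} hv => ?_⟩⟩
  rw [congrFun heq v']
  exact f.map_adj ⟨hv, hxy⟩

theorem nonempty_hom_or_of_hom_sum (hG : G.Preconnected) (f : G →g T ⊕g F) :
    Nonempty (G →g T) ∨ Nonempty (G →g F) := by
  by_cases hinl : ∃ v t, f v = .inl t
  · obtain ⟨v₀, t₀, hv₀⟩ := hinl
    have hrange : ∀ v, ∃ t, f v = .inl t := fun v => by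
      have hreach := (hG v₀ v).map f
      rw [hv₀] at hreach
      cases hv : f v with
      | inl t => exact ⟨t, rfl⟩
      | inr x => exact absurd (hv ▸ hreach) (not_reachable_sum_inl_inr t₀ x)
    choose g hg using hrange
    refine .inl ⟨⟨g, fun {v v'} hadj => ?_⟩⟩
    simpa only [hg, sum_adj_inl] using f.map_adj hadj
  · have hrange : ∀ v, ∃ x, f v = .inr x := fun v => by
      cases hv : f v with
      | inl t => exact absurd ⟨v, t, hv⟩ hinl
      | inr x => exact ⟨x, rfl⟩
    choose g hg using hrange
    refine .inr ⟨⟨g, fun {v v'} hadj => ?_⟩⟩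
    simpa only [hg, sum_adj_inr] using f.map_adj hadj

theorem nonempty_hom_of_colorable_two (hT : T ≠ ⊥) (hG : G.Colorable 2) : Nonempty (G →g T) := by
  obtain ⟨a, b, hab⟩ := ne_bot_iff_exists_adj.mp hT
  let edge : (⊤ : SimpleGraph (Fin 2)) →g T := ⟨![a, b], fun {i j} hij => by
    fin_cases i <;> fin_cases j <;> simp_all [hab.symm]⟩
  exact hG.elim fun c => ⟨edge.comp c⟩

theorem exists_odd_closed_walk_of_isEmpty_hom (hT : T ≠ ⊥) (hGT : IsEmpty (G →g T)) :
    ∃ v, ∃ w : G.Walk v v, Odd w.length := by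
  have hG : ¬ G.Colorable 2 := fun hG =>
    not_isEmpty_iff.mpr (nonempty_hom_of_colorable_two hT hG) hGT
  simpa only [two_colorable_iff_forall_loop_even, not_forall, Nat.not_even_iff_odd] using hG

theorem exists_connectedComponent_isEmpty_hom (hGT : IsEmpty (G →g T)) :
    ∃ C : G.ConnectedComponent, IsEmpty (C.toSimpleGraph →g T) := by
  by_contra! hcomp
  exact hGT.false (homOfConnectedComponents G fun C => (hcomp C).some)

end Hom

theorem welzl_general {V : Type u} {W : Type v} (T : SimpleGraph V) (G : SimpleGraph W)
    (hT : T ≠ ⊥) (hTG : Nonempty (T →g G)) (hGT : IsEmpty (G →g T)) :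
    ∃ (X : Type max u v) (H : SimpleGraph X), (Finite V → Finite W → Finite X) ∧
      Nonempty (T →g H) ∧ Nonempty (H →g G) ∧ IsEmpty (H →g T) ∧ IsEmpty (G →g H) := by
  obtain ⟨C, hC⟩ := exists_connectedComponent_isEmpty_hom hGT
  obtain ⟨v, w, hw⟩ := exists_odd_closed_walk_of_isEmpty_hom hT hC
  obtain ⟨X, F, hX, hcol, heven⟩ :=
    exists_isEmpty_coloring_and_even_short_closed_walks (C → V) w.length
  refine ⟨V ⊕ (C × X), T ⊕g tensorProd C.toSimpleGraph F, fun _ _ => ?_,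
    ⟨Embedding.sumInl.toHom⟩, ?_, ⟨fun f => ?_⟩, ⟨fun f => ?_⟩⟩
  · have := hX inferInstance
    infer_instance
  · exact hTG.map fun t => homSumElim t (C.toSimpleGraph_hom.comp tensorProd.fst)
  · exact not_isEmpty_iff.mpr
      (nonempty_hom_of_tensorProd_hom hcol (f.comp Embedding.sumInr.toHom)) hC
  · obtain ⟨⟨g⟩⟩ | ⟨⟨g⟩⟩ := nonempty_hom_or_of_hom_sum C.connected_toSimpleGraph.preconnected
      (f.comp C.toSimpleGraph_hom)
    · exact hC.false g
    · have hmap := heven _ (w.map (tensorProd.snd.comp g)) (Walk.length_map _ w).le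
      exact Nat.not_even_iff_odd.mpr hw (by rwa [Walk.length_map] at hmap)

/-- **Welzl's theorem**: if `T` and `G` are finite simple graphs with `χ(T) ≥ 3`,
such that there is a graph homomorphism `T → G` but none `G → T`, then there is a
finite simple graph `H` with homomorphisms `T → H` and `H → G`, but with no
homomorphism `H → T` and none `G → H`. -/
theorem welzl {V W : Type} [Fintype V] [Fintype W]
    (T : SimpleGraph V) (G : SimpleGraph W)
    (hchi : 3 ≤ T.chromaticNumber)
    (hTG : Nonempty (T →g G)) (hGT : IsEmpty (G →g T)) :
    ∃ (m : ℕ) (H : SimpleGraph (Fin m)),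
      Nonempty (T →g H) ∧ Nonempty (H →g G) ∧
      IsEmpty (H →g T) ∧ IsEmpty (G →g H) := by
  have hT : T ≠ ⊥ := two_le_chromaticNumber_iff_ne_bot.mp (le_trans (by norm_num) hchi)
  obtain ⟨X, H, hX, ⟨t⟩, ⟨g⟩, hHT, hGH⟩ := welzl_general T G hT hTG hGT
  have := hX inferInstance inferInstance
  have := Fintype.ofFinite X
  let e := H.overFinIso rfl
  exact ⟨_, H.overFin rfl, ⟨e.toHom.comp t⟩, ⟨g.comp e.symm.toHom⟩,
    ⟨fun f => hHT.false (f.comp e.toHom)⟩, ⟨fun f => hGH.false (e.symm.toHom.comp f)⟩⟩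
end

section
/- Let G be a finite simple graph and k ≥ −1 an integer. If the geometric realization of the nerve (order complex) of the poset of all nonempty finite subsets A of V(G) having a common neighbor (i.e., there is a vertex v adjacent to every element of A), ordered by inclusion, is k-connected, then χ(G) ≥ k + 3. -/
/-!
A proper colouring of `G` assigns to a pair of vertex sets, each vertex of the first adjacent to
each vertex of the second, the sign vector that is `1` at the colours of the first set and `-1` at
those of the second. Maximal pairs of this kind form a poset that is a retract of the face poset
of the neighbourhood complex; exchanging the two sides is an order-reversing involution, and the
sign vectors extend affinely to an odd map `g` from the order complex to `ℝⁿ⁺¹`, where `n + 1` is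
the number of colours. The first sides in a chain have a common vertex, as do the second sides, so
each value of `g` has an entry `1` and an entry `-1`: the differences with the last entry form an
odd map to `ℝⁿ` without zeros. If the complex is `(n - 1)`-connected, then there is an equivariant
map from the `n`-sphere to it, built by suspension one dimension at a time, and the composite
contradicts the Borsuk–Ulam theorem. The latter follows from Tucker's lemma, proved by counting
mod 2 the alternating simplices of iterated barycentric subdivisions of the boundary of the
cross-polytope.
-/

open CategoryTheory

/-- A space is `k`-connected (for an integer `k ≥ -1`) if it is nonempty and all its
homotopy groups `π_n` vanish for `0 ≤ n ≤ k` (for `n = 0` this means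
path-connectedness). `(-1)`-connected just means nonempty. -/
def KConnected (k : ℤ) (X : Type*) [TopologicalSpace X] : Prop :=
  Nonempty X ∧ ∀ n : ℕ, (n : ℤ) ≤ k → ∀ x : X, Subsingleton (HomotopyGroup (Fin n) X x)

/-- The poset of nonempty finite subsets of `V(G)` having a common neighbor,
ordered by inclusion: the face poset of the neighborhood complex `N(G)`. -/
def NbhdPoset {V : Type} (G : SimpleGraph V) : Type :=
  {A : Finset V // A.Nonempty ∧ ∃ v : V, ∀ a ∈ A, G.Adj v a}

instance {V : Type} (G : SimpleGraph V) : Preorder (NbhdPoset G) :=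
  Subtype.preorder _

/-- The neighborhood complex of `G`, realized topologically as the geometric
realization of the nerve (order complex) of the poset of nonempty subsets of `V(G)`
with a common neighbor. -/
noncomputable def nbhdComplex {V : Type} (G : SimpleGraph V) : TopCat :=
  SSet.toTop.obj (nerve (NbhdPoset G))

namespace Lovasz

section Chains

variable {E F M : Type*}

/-- Augmented mod-2 ordered simplicial chains: the list `[x₀, …, xₙ]` is an `n`-simplex with
vertices in `E`, and `[]` is the generator in degree `-1`. -/
abbrev Chain (E : Type*) : Type _ := List E →₀ ZMod 2

namespace Chain

/-- The simplex `σ` as a chain. -/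
noncomputable abbrev of (σ : List E) : Chain E := Finsupp.single σ 1

/-- The cone operator, adjoining the apex `a` as a new first vertex. -/
noncomputable def cone (a : E) : Chain E →ₗ[ZMod 2] Chain E :=
  Finsupp.lmapDomain _ _ (List.cons a)

/-- The augmented simplicial boundary operator. -/
noncomputable def boundary : Chain E →ₗ[ZMod 2] Chain E :=
  Finsupp.linearCombination (ZMod 2) fun σ => ∑ i : Fin σ.length, of (σ.eraseIdx i)

/-- The chain map induced by a map of vertices. -/
noncomputable def map (φ : E → F) : Chain E →ₗ[ZMod 2] Chain F :=
  Finsupp.lmapDomain _ _ (List.map φ)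

/-- The chains all of whose simplices satisfy `P`. -/
def supportedOn (P : List E → Prop) : Submodule (ZMod 2) (Chain E) :=
  Finsupp.supported (ZMod 2) (ZMod 2) {σ | P σ}

@[simp]
lemma cone_of (a : E) (σ : List E) : cone a (of σ) = of (a :: σ) := by
  simp [cone, Finsupp.lmapDomain_apply]

@[simp]
lemma map_of (φ : E → F) (σ : List E) : map φ (of σ) = of (σ.map φ) := by
  simp [map, Finsupp.lmapDomain_apply]

lemma boundary_of (σ : List E) :
    boundary (of σ) = ∑ i : Fin σ.length, of (σ.eraseIdx i) := by
  simp [boundary]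

@[simp]
lemma boundary_of_nil : boundary (of ([] : List E)) = 0 := by
  simp [boundary_of]

lemma boundary_of_cons (a : E) (σ : List E) :
    boundary (of (a :: σ)) = of σ + cone a (boundary (of σ)) := by
  simp only [boundary_of, map_sum, cone_of]
  exact Fin.sum_univ_succ _

lemma add_self (c : Chain E) : c + c = 0 := by
  ext σ
  simp [CharTwo.add_self_eq_zero]

section Supported

variable {P Q : List E → Prop} {c : Chain E}

lemma of_mem_supportedOn {σ : List E} (h : P σ) : of σ ∈ supportedOn P :=
  Finsupp.single_mem_supported _ _ h

lemma supportedOn_mono (h : ∀ σ, P σ → Q σ) (hc : c ∈ supportedOn P) : c ∈ supportedOn Q :=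
  Finsupp.supported_mono h hc

lemma apply_mem_of_supportedOn [AddCommMonoid M] [Module (ZMod 2) M]
    {f : Chain E →ₗ[ZMod 2] M} {N : Submodule (ZMod 2) M} (h : ∀ σ, P σ → f (of σ) ∈ N)
    (hc : c ∈ supportedOn P) : f c ∈ N := by
  have hle : supportedOn P ≤ N.comap f := by
    rw [supportedOn, Finsupp.supported_eq_span_single, Submodule.span_le]
    rintro _ ⟨σ, hσ, rfl⟩
    exact h σ hσ
  exact hle hc

lemma eq_zero_of_supportedOn [AddCommMonoid M] [Module (ZMod 2) M]
    {f : Chain E →ₗ[ZMod 2] M} (h : ∀ σ, P σ → f (of σ) = 0) (hc : c ∈ supportedOn P) :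
    f c = 0 :=
  apply_mem_of_supportedOn (N := ⊥) h hc

lemma cone_mem_supportedOn (a : E) (h : ∀ σ, P σ → Q (a :: σ)) (hc : c ∈ supportedOn P) :
    cone a c ∈ supportedOn Q :=
  apply_mem_of_supportedOn (fun σ hσ => by simpa using of_mem_supportedOn (h σ hσ)) hc

lemma map_mem_supportedOn {R : List F → Prop} {φ : E → F} (h : ∀ σ, P σ → R (σ.map φ))
    (hc : c ∈ supportedOn P) : map φ c ∈ supportedOn R :=
  apply_mem_of_supportedOn (fun σ hσ => by simpa using of_mem_supportedOn (h σ hσ)) hc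

end Supported

lemma linearMap_ext [AddCommMonoid M] [Module (ZMod 2) M] {f g : Chain E →ₗ[ZMod 2] M}
    (h : ∀ σ, f (of σ) = g (of σ)) : f = g :=
  Finsupp.lhom_ext' fun σ => LinearMap.ext_ring (h σ)

lemma boundary_cone (a : E) (c : Chain E) :
    boundary (cone a c) = c + cone a (boundary c) :=
  LinearMap.congr_fun (f := boundary ∘ₗ cone a) (g := LinearMap.id + cone a ∘ₗ boundary)
    (linearMap_ext fun σ => by simp [boundary_of_cons]) c

lemma boundary_boundary (c : Chain E) : boundary (boundary c) = 0 := by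
  refine LinearMap.congr_fun (f := boundary ∘ₗ boundary) (g := 0) (linearMap_ext fun σ => ?_) c
  induction σ with
  | nil => simp
  | cons a σ ih => simp_all [boundary_of_cons, boundary_cone, add_self]

lemma map_cone (φ : E → F) (a : E) (c : Chain E) : map φ (cone a c) = cone (φ a) (map φ c) :=
  LinearMap.congr_fun (f := map φ ∘ₗ cone a) (g := cone (φ a) ∘ₗ map φ)
    (linearMap_ext fun σ => by simp) c

lemma boundary_map (φ : E → F) (c : Chain E) : boundary (map φ c) = map φ (boundary c) := by
  refine LinearMap.congr_fun (f := boundary ∘ₗ map φ) (g := map φ ∘ₗ boundary)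
    (linearMap_ext fun σ => ?_) c
  simp only [LinearMap.comp_apply, map_of]
  induction σ with
  | nil => simp
  | cons a σ ih => simp [boundary_of_cons, map_cone, ih]

section Subdivide

/-- The subdivision of a simplex with respect to a choice `b` of a point of every simplex: the cone
from `b σ` over the subdivided boundary of `σ`. -/
noncomputable def subdivideSimplex (b : List E → E) : List E → Chain E
  | [] => of []
  | a :: σ => cone (b (a :: σ))
      (∑ i : Fin (σ.length + 1), subdivideSimplex b ((a :: σ).eraseIdx i))
termination_by σ => σ.length
decreasing_by
  rw [List.length_eraseIdx_of_lt i.2]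
  simp

/-- The linear extension of `subdivideSimplex` to chains; the barycentric subdivision is the case
where `b` is the barycentre. -/
noncomputable def subdivide (b : List E → E) : Chain E →ₗ[ZMod 2] Chain E :=
  Finsupp.linearCombination (ZMod 2) (subdivideSimplex b)

variable (b : List E → E)

@[simp]
lemma subdivide_of_nil : subdivide b (of []) = of [] := by
  simp [subdivide, subdivideSimplex]

lemma subdivide_of {σ : List E} (hσ : σ ≠ []) :
    subdivide b (of σ) = cone (b σ) (subdivide b (boundary (of σ))) := by
  obtain ⟨a, σ, rfl⟩ := List.exists_cons_of_ne_nil hσ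
  simp [subdivide, subdivideSimplex, boundary_of]

lemma facet_induction {P : List E → Prop}
    (facet : ∀ σ, (∀ i < σ.length, P (σ.eraseIdx i)) → P σ) (σ : List E) : P σ := by
  induction h : σ.length using Nat.strong_induction_on generalizing σ with
  | _ n ih =>
    refine facet σ fun i hi => ih _ ?_ _ rfl
    rw [List.length_eraseIdx_of_lt hi]
    omega

lemma boundary_subdivide (c : Chain E) :
    boundary (subdivide b c) = subdivide b (boundary c) := by
  refine LinearMap.congr_fun (f := boundary ∘ₗ subdivide b) (g := subdivide b ∘ₗ boundary)
    (linearMap_ext fun σ => ?_) c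
  induction σ using facet_induction with
  | facet σ ih =>
    rcases eq_or_ne σ [] with rfl | hσ
    · simp
    have hcycle : boundary (subdivide b (boundary (of σ))) = 0 := by
      have hfacets : boundary (subdivide b (boundary (of σ))) =
          subdivide b (boundary (boundary (of σ))) := by
        rw [boundary_of]
        simp only [map_sum]
        exact Finset.sum_congr rfl fun i _ => ih i i.2
      rw [hfacets, boundary_boundary, map_zero]
    simp [subdivide_of b hσ, boundary_cone, hcycle]

lemma map_subdivide {b' : List F → F} {φ : E → F} (h : ∀ σ, φ (b σ) = b' (σ.map φ))
    (c : Chain E) : map φ (subdivide b c) = subdivide b' (map φ c) := by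
  refine LinearMap.congr_fun (f := map φ ∘ₗ subdivide b) (g := subdivide b' ∘ₗ map φ)
    (linearMap_ext fun σ => ?_) c
  induction σ using facet_induction with
  | facet σ ih =>
    rcases eq_or_ne σ [] with rfl | hσ
    · simp
    have hfacets : map φ (subdivide b (boundary (of σ))) =
        subdivide b' (map φ (boundary (of σ))) := by
      rw [boundary_of]
      simp only [map_sum]
      exact Finset.sum_congr rfl fun i _ => ih i i.2
    have hσ' : σ.map φ ≠ [] := by simpa using hσ
    simp only [LinearMap.comp_apply, subdivide_of b hσ, map_cone, h, hfacets, map_of,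
      subdivide_of b' hσ', ← boundary_map]

lemma subdivide_of_mem_supportedOn {Q : List E → List E → Prop} (nil : Q [] [])
    (cons : ∀ σ ρ i, i < σ.length → Q (σ.eraseIdx i) ρ → Q σ (b σ :: ρ)) (σ : List E) :
    subdivide b (of σ) ∈ supportedOn (Q σ) := by
  induction σ using facet_induction with
  | facet σ ih =>
    rcases eq_or_ne σ [] with rfl | hσ
    · simpa using of_mem_supportedOn nil
    rw [subdivide_of b hσ, boundary_of, map_sum, map_sum]
    exact Submodule.sum_mem _ fun i _ =>
      cone_mem_supportedOn (b σ) (fun ρ => cons σ ρ i i.2) (ih i i.2)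

end Subdivide

end Chain

end Chains

section Alternating

/-- The entries of the list alternate between positive and nonpositive, the first one being
positive exactly if `s = true`. -/
def IsAlternating : Bool → List ℤ → Prop
  | _, [] => True
  | s, a :: σ => decide (0 < a) = s ∧ IsAlternating (!s) σ

/-- The number modulo 2 of simplices in the support of a chain that alternate, starting with the
sign `s`. -/
noncomputable def alternatingCount (s : Bool) : Chain ℤ →ₗ[ZMod 2] ZMod 2 :=
  Finsupp.linearCombination (ZMod 2) (Set.indicator {σ | IsAlternating s σ} 1)

lemma alternatingCount_of (s : Bool) (σ : List ℤ) [Decidable (IsAlternating s σ)] :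
    alternatingCount s (.of σ) = if IsAlternating s σ then 1 else 0 := by
  simp [alternatingCount, Set.indicator]

lemma alternatingCount_cone (s : Bool) (a : ℤ) (c : Chain ℤ) :
    alternatingCount s (.cone a c) =
      if decide (0 < a) = s then alternatingCount (!s) c else 0 := by
  classical
  split_ifs with h
  · refine LinearMap.congr_fun (f := alternatingCount s ∘ₗ Chain.cone a)
      (Chain.linearMap_ext fun σ => ?_) c
    rw [LinearMap.comp_apply, Chain.cone_of, alternatingCount_of, alternatingCount_of]
    exact if_congr (and_iff_right h) rfl rfl
  · refine LinearMap.congr_fun (f := alternatingCount s ∘ₗ Chain.cone a) (g := 0)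
      (Chain.linearMap_ext fun σ => ?_) c
    rw [LinearMap.comp_apply, Chain.cone_of, alternatingCount_of]
    exact if_neg fun halt => h halt.1

/-- An alternating simplex has one alternating facet for each initial sign that it does not have
itself; the facets of any other simplex contribute an even number. -/
lemma alternatingCount_boundary (s : Bool) (c : Chain ℤ) :
    alternatingCount s (.boundary c) = alternatingCount s c + alternatingCount (!s) c := by
  refine LinearMap.congr_fun (f := alternatingCount s ∘ₗ Chain.boundary)
    (g := alternatingCount s + alternatingCount (!s)) (Chain.linearMap_ext fun σ => ?_) c
  classical
  simp only [LinearMap.comp_apply, LinearMap.add_apply]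
  induction σ generalizing s with
  | nil => simp [alternatingCount_of, IsAlternating, CharTwo.add_self_eq_zero]
  | cons a σ ih =>
    rw [Chain.boundary_of_cons, map_add, alternatingCount_cone, ih, ← Chain.cone_of,
      alternatingCount_cone, alternatingCount_cone, Bool.not_not]
    rcases Bool.eq_or_eq_not (decide (0 < a)) s with h | h
    · simp [h, ← add_assoc, CharTwo.add_self_eq_zero, add_comm]
    · simp [h]

lemma isAlternating_map_neg {s : Bool} {σ : List ℤ} (hσ : ∀ a ∈ σ, a ≠ 0) :
    IsAlternating s (σ.map Neg.neg) ↔ IsAlternating (!s) σ := by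
  induction σ generalizing s with
  | nil => rfl
  | cons a σ ih =>
    have hsign : decide (0 < -a) = !decide (0 < a) := by
      have := hσ a List.mem_cons_self
      grind
    have htail := ih (s := !s) fun b hb => hσ b (List.mem_cons_of_mem a hb)
    simp only [List.map_cons, IsAlternating, htail, hsign]
    grind

lemma alternatingCount_map_neg {c : Chain ℤ}
    (hc : c ∈ Chain.supportedOn fun σ => ∀ a ∈ σ, a ≠ 0) (s : Bool) :
    alternatingCount s (.map Neg.neg c) = alternatingCount (!s) c := by
  classical
  rw [← sub_eq_zero]
  refine Chain.eq_zero_of_supportedOn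
    (f := alternatingCount s ∘ₗ Chain.map Neg.neg - alternatingCount (!s)) (fun σ hσ => ?_) hc
  simp only [LinearMap.sub_apply, LinearMap.comp_apply, Chain.map_of, alternatingCount_of,
    sub_eq_zero]
  exact if_congr (isAlternating_map_neg hσ) rfl rfl

/-- Adjacent entries have different signs and are not opposite, so the absolute values strictly
decrease. -/
lemma IsAlternating.length_le_abs {s : Bool} {a : ℤ} {σ : List ℤ} (halt : IsAlternating s (a :: σ))
    (hsort : (a :: σ).Pairwise (|·| ≥ |·|)) (hcompl : ∀ x ∈ a :: σ, ∀ y ∈ a :: σ, x ≠ -y) :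
    ((a :: σ).length : ℤ) ≤ |a| := by
  induction σ generalizing a s with
  | nil =>
    have := hcompl a List.mem_cons_self a List.mem_cons_self
    grind
  | cons b σ ih =>
    have htail := ih halt.2 hsort.of_cons
      fun x hx y hy => hcompl x (.tail a hx) y (.tail a hy)
    have hle : |b| ≤ |a| := List.rel_of_pairwise_cons hsort List.mem_cons_self
    have hne : a ≠ -b := hcompl a (by simp) b (by simp)
    obtain ⟨hsa, hsb, -⟩ := halt
    simp only [List.length_cons, Nat.cast_add, Nat.cast_one] at htail ⊢
    grind

/-- The entry of largest absolute value, the first one if there are several. -/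
def maxAbsEntry (σ : List ℤ) : ℤ :=
  σ.foldr (fun a m => if |m| ≤ |a| then a else m) 0

lemma neg_maxAbsEntry (σ : List ℤ) : -maxAbsEntry σ = maxAbsEntry (σ.map Neg.neg) := by
  induction σ with
  | nil => rfl
  | cons a σ ih =>
    simp only [maxAbsEntry, List.map_cons, List.foldr_cons] at ih ⊢
    rw [← ih]
    grind

lemma abs_le_abs_maxAbsEntry {σ : List ℤ} {a : ℤ} (ha : a ∈ σ) : |a| ≤ |maxAbsEntry σ| := by
  induction σ with
  | nil => simp at ha
  | cons b σ ih =>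
    simp only [maxAbsEntry, List.foldr_cons] at ih ⊢
    grind

lemma maxAbsEntry_mem {σ : List ℤ} (hσ : σ ≠ []) : maxAbsEntry σ ∈ σ := by
  induction σ with
  | nil => contradiction
  | cons a σ ih =>
    simp only [maxAbsEntry, List.foldr_cons] at ih ⊢
    rcases eq_or_ne σ [] with rfl | hne
    · simp
    · grind

lemma subdivide_maxAbsEntry_mem_supportedOn (σ : List ℤ) :
    Chain.subdivide maxAbsEntry (.of σ) ∈ Chain.supportedOn fun ρ =>
      ρ.length = σ.length ∧ ρ ⊆ σ ∧ ρ.Pairwise (|·| ≥ |·|) := by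
  refine Chain.subdivide_of_mem_supportedOn _
    (Q := fun σ ρ => ρ.length = σ.length ∧ ρ ⊆ σ ∧ ρ.Pairwise (|·| ≥ |·|)) (by simp) ?_ σ
  rintro σ ρ i hi ⟨hlen, hsub, hsort⟩
  have hσ : σ ≠ [] := List.ne_nil_of_length_pos (by omega)
  replace hsub := List.Subset.trans hsub (List.eraseIdx_subset)
  refine ⟨?_, List.cons_subset.2 ⟨maxAbsEntry_mem hσ, hsub⟩,
    List.pairwise_cons.2 ⟨fun a ha => abs_le_abs_maxAbsEntry (hsub ha), hsort⟩⟩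
  rw [List.length_eraseIdx_of_lt hi] at hlen
  simp only [List.length_cons]
  omega

end Alternating

section Barycentric

variable {E : Type*} [NormedAddCommGroup E] [NormedSpace ℝ E]

/-- The barycentre of the simplex with vertices `σ`. -/
noncomputable def barycentre (σ : List E) : E := (σ.length : ℝ)⁻¹ • σ.sum

lemma neg_barycentre (σ : List E) : -barycentre σ = barycentre (σ.map Neg.neg) := by
  have hsum : (σ.map Neg.neg).sum = -σ.sum := (map_list_sum (negAddMonoidHom (α := E)) σ).symm
  simp [barycentre, hsum]

lemma barycentre_mem_convexHull {σ : List E} (hσ : σ ≠ []) :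
    barycentre σ ∈ convexHull ℝ {x | x ∈ σ} := by
  have hlen : (σ.length : ℝ) ≠ 0 := by simpa using hσ
  rw [barycentre, ← Fin.sum_univ_getElem, Finset.smul_sum]
  exact (convex_convexHull ℝ _).sum_mem (fun i _ => by positivity) (by simp [hlen])
    fun i _ => subset_convexHull ℝ _ (List.getElem_mem _)

/-- The barycentre lies on the segment from `x` to the barycentre of the facet opposite to `x`. -/
lemma dist_barycentre_le {σ : List E} {x : E} (hx : x ∈ σ) :
    dist (barycentre σ) x ≤ (σ.length - 1) / σ.length * Metric.diam {y | y ∈ σ} := by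
  classical
  have hperm := List.perm_cons_erase hx
  have hlen : (σ.length : ℝ) - 1 = (σ.erase x).length := by simp [hperm.length_eq]
  rcases eq_or_ne (σ.erase x) [] with hnil | hnil
  · rw [hlen, barycentre, hperm.sum_eq, hperm.length_eq]
    simp [hnil]
  have hdist : dist (barycentre (σ.erase x)) x ≤ Metric.diam {y | y ∈ σ} := by
    rw [← convexHull_diam]
    have hsub : {y | y ∈ σ.erase x} ⊆ {y | y ∈ σ} := fun y hy => List.mem_of_mem_erase hy
    exact Metric.dist_le_diam_of_mem (isBounded_convexHull.2 σ.finite_toSet.isBounded)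
      (convexHull_mono hsub (barycentre_mem_convexHull hnil)) (subset_convexHull ℝ _ hx)
  have hseg : barycentre σ - x =
      ((σ.length - 1) / σ.length : ℝ) • (barycentre (σ.erase x) - x) := by
    have : ((σ.erase x).length : ℝ) ≠ 0 := by simpa using hnil
    rw [hlen, barycentre, barycentre, hperm.sum_eq, hperm.length_eq, List.sum_cons,
      List.length_cons, Nat.cast_add_one]
    match_scalars <;> field_simp
    ring
  rw [dist_eq_norm, hseg, norm_smul, ← dist_eq_norm, hlen, Real.norm_of_nonneg (by positivity)]
  gcongr

/-- `ρ` is as long as `σ`, lies in the simplex spanned by `σ` and, if `σ` has dimension at most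
`N`, its diameter is smaller than that of `σ` at least by a factor `N / (N + 1)`. -/
def Refines (N : ℕ) (ρ σ : List E) : Prop :=
  ρ.length = σ.length ∧ {x | x ∈ ρ} ⊆ convexHull ℝ {x | x ∈ σ} ∧
    (σ.length ≤ N + 1 →
      Metric.diam {x | x ∈ ρ} ≤ N / (N + 1) * Metric.diam {x | x ∈ σ})

lemma Refines.cons {N : ℕ} {σ ρ : List E} {i : ℕ} (hi : i < σ.length)
    (h : Refines N ρ (σ.eraseIdx i)) : Refines N (barycentre σ :: ρ) σ := by
  obtain ⟨hlen, hsub, hdiam⟩ := h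
  have hσ : σ ≠ [] := List.ne_nil_of_length_pos (by omega)
  have herase : {x | x ∈ σ.eraseIdx i} ⊆ {x | x ∈ σ} := fun x hx => List.eraseIdx_subset hx
  replace hsub := hsub.trans (convexHull_mono herase)
  rw [List.length_eraseIdx_of_lt hi] at hlen hdiam
  refine ⟨by simp only [List.length_cons]; omega, ?_, fun hN => ?_⟩
  · rintro x (_ | ⟨_, hx⟩)
    exacts [barycentre_mem_convexHull hσ, hsub hx]
  have hbounded : Bornology.IsBounded {x | x ∈ σ} := σ.finite_toSet.isBounded
  have hbary : ∀ x ∈ ρ, dist x (barycentre σ) ≤ N / (N + 1) * Metric.diam {y | y ∈ σ} := by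
    refine fun x hx => convexHull_min (fun y hy => ?_)
      (convex_closedBall (barycentre σ) (N / (N + 1) * Metric.diam {y | y ∈ σ})) (hsub hx)
    rw [Metric.mem_closedBall, dist_comm]
    refine (dist_barycentre_le hy).trans (mul_le_mul_of_nonneg_right ?_ Metric.diam_nonneg)
    have hpos : (0 : ℝ) < σ.length := by exact_mod_cast List.length_pos_iff.2 hσ
    have hle : (σ.length : ℝ) ≤ N + 1 := by exact_mod_cast hN
    rw [div_le_div_iff₀ hpos (by positivity)]
    linarith
  have hρ : ∀ x ∈ ρ, ∀ y ∈ ρ, dist x y ≤ N / (N + 1) * Metric.diam {y | y ∈ σ} :=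
    fun x hx y hy => (Metric.dist_le_diam_of_mem ρ.finite_toSet.isBounded hx hy).trans <|
      (hdiam (by omega)).trans <|
        mul_le_mul_of_nonneg_left (Metric.diam_mono herase hbounded) (by positivity)
  refine Metric.diam_le_of_forall_dist_le (by positivity) ?_
  rintro x (_ | ⟨_, hx⟩) y (_ | ⟨_, hy⟩)
  · simpa using by positivity
  · exact dist_comm y _ ▸ hbary y hy
  · exact hbary x hx
  · exact hρ x hx y hy

lemma subdivide_barycentre_mem_supportedOn (N : ℕ) (σ : List E) :
    Chain.subdivide barycentre (.of σ) ∈ Chain.supportedOn (Refines N · σ) :=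
  Chain.subdivide_of_mem_supportedOn _ (Q := fun σ ρ => Refines N ρ σ)
    ⟨rfl, by simp, by simp⟩ (fun _ _ _ hi h => h.cons hi) σ

lemma iterate_subdivide_barycentre_mem_supportedOn {N : ℕ} (M : ℕ) {σ : List E}
    (hσ : σ.length ≤ N + 1) :
    (Chain.subdivide barycentre)^[M] (.of σ) ∈ Chain.supportedOn fun ρ =>
      ρ.length = σ.length ∧ {x | x ∈ ρ} ⊆ convexHull ℝ {x | x ∈ σ} ∧
        Metric.diam {x | x ∈ ρ} ≤ (N / (N + 1)) ^ M * Metric.diam {x | x ∈ σ} := by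
  induction M with
  | zero => exact Chain.of_mem_supportedOn ⟨rfl, subset_convexHull ℝ _, by simp⟩
  | succ M ih =>
    rw [Function.iterate_succ_apply']
    refine Chain.apply_mem_of_supportedOn ?_ ih
    rintro ρ ⟨hlen, hsub, hdiam⟩
    refine Chain.supportedOn_mono ?_ (subdivide_barycentre_mem_supportedOn N ρ)
    rintro π ⟨hlen', hsub', hdiam'⟩
    refine ⟨hlen'.trans hlen, hsub'.trans (convexHull_min hsub (convex_convexHull ℝ _)), ?_⟩
    calc Metric.diam {x | x ∈ π} ≤ N / (N + 1) * Metric.diam {x | x ∈ ρ} := hdiam' (by omega)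
      _ ≤ N / (N + 1) * ((N / (N + 1)) ^ M * Metric.diam {x | x ∈ σ}) := by gcongr
      _ = (N / (N + 1)) ^ (M + 1) * Metric.diam {x | x ∈ σ} := by ring

end Barycentric

section Octahedral

variable {E : Type*} [InvolutiveNeg E] (e : ℕ → E)

/-- The fundamental cycle of the boundary of the cross-polytope with vertices `±e 0, …, ±e (j - 1)`,
as the sum of the hemisphere `cone (e j) (octahedralCycle e j)` and its antipode. -/
noncomputable def octahedralCycle : ℕ → Chain E
  | 0 => .of []
  | j + 1 => .cone (e j) (octahedralCycle j) + .map Neg.neg (.cone (e j) (octahedralCycle j))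

lemma Chain.map_neg_map_neg (c : Chain E) : Chain.map Neg.neg (Chain.map Neg.neg c) = c :=
  LinearMap.congr_fun (f := Chain.map Neg.neg ∘ₗ Chain.map Neg.neg) (g := LinearMap.id)
    (Chain.linearMap_ext fun σ => by simp) c

lemma map_neg_octahedralCycle (j : ℕ) :
    Chain.map Neg.neg (octahedralCycle e j) = octahedralCycle e j := by
  cases j with
  | zero => simp [octahedralCycle]
  | succ j => rw [octahedralCycle, map_add, Chain.map_neg_map_neg, add_comm]

lemma boundary_octahedralCycle (j : ℕ) : Chain.boundary (octahedralCycle e j) = 0 := by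
  induction j with
  | zero => simp [octahedralCycle]
  | succ j ih =>
    simp [octahedralCycle, Chain.boundary_map, Chain.boundary_cone, ih,
      map_neg_octahedralCycle, Chain.add_self]

lemma boundary_cone_octahedralCycle (j : ℕ) :
    Chain.boundary (.cone (e j) (octahedralCycle e j)) = octahedralCycle e j := by
  simp [Chain.boundary_cone, boundary_octahedralCycle]

/-- **Ky Fan's parity lemma**: passing to the boundary, the hemispheres of the octahedral spheres
pair up the alternating simplices of a sphere with those of the equator. -/
lemma alternatingCount_octahedralCycle {T : Chain E →ₗ[ZMod 2] Chain ℤ}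
    (T_nil : T (.of []) = .of []) (boundary_T : ∀ c, Chain.boundary (T c) = T (Chain.boundary c))
    (T_neg : ∀ c, T (.map Neg.neg c) = .map Neg.neg (T c)) {j : ℕ}
    (T_ne_zero : ∀ i < j, T (.cone (e i) (octahedralCycle e i)) ∈
      Chain.supportedOn fun σ => ∀ a ∈ σ, a ≠ 0) (s : Bool) :
    alternatingCount s (T (octahedralCycle e j)) = 1 := by
  induction j generalizing s with
  | zero =>
    classical
    rw [octahedralCycle, T_nil, alternatingCount_of]
    exact if_pos trivial
  | succ j ih =>
    rw [octahedralCycle, map_add, T_neg, map_add,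
      alternatingCount_map_neg (T_ne_zero j j.lt_succ_self), ← alternatingCount_boundary,
      boundary_T, boundary_cone_octahedralCycle]
    exact ih (fun i hi => T_ne_zero i (hi.trans j.lt_succ_self)) s

/-- `σ` is a facet of the cross-polytope with vertices `±e 0, …, ±e (j - 1)`, the signs being given
by a choice `s i = ±e i`; degenerate simplices are not excluded. -/
def IsOctahedralFacet (j : ℕ) (σ : List E) : Prop :=
  σ.length = j ∧ ∃ s : ℕ → E, (∀ i, s i = e i ∨ s i = -e i) ∧ ∀ x ∈ σ, ∃ i < j, x = s i

variable {e}

lemma IsOctahedralFacet.cons {j : ℕ} {σ : List E} (hσ : IsOctahedralFacet e j σ) :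
    IsOctahedralFacet e (j + 1) (e j :: σ) := by
  obtain ⟨hlen, s, hs, hmem⟩ := hσ
  refine ⟨by simp [hlen], Function.update s j (e j), fun i => ?_, ?_⟩
  · rcases eq_or_ne i j with rfl | hij
    · simp
    · simpa [hij] using hs i
  · rintro x (_ | ⟨_, hx⟩)
    · exact ⟨j, j.lt_succ_self, by simp⟩
    · obtain ⟨i, hi, rfl⟩ := hmem x hx
      exact ⟨i, hi.trans j.lt_succ_self, by simp [hi.ne]⟩

lemma IsOctahedralFacet.map_neg {j : ℕ} {σ : List E} (hσ : IsOctahedralFacet e j σ) :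
    IsOctahedralFacet e j (σ.map Neg.neg) := by
  obtain ⟨hlen, s, hs, hmem⟩ := hσ
  refine ⟨by simp [hlen], fun i => -s i, fun i => ?_, fun x hx => ?_⟩
  · rcases hs i with h | h <;> simp [h]
  · obtain ⟨y, hy, rfl⟩ := List.mem_map.1 hx
    obtain ⟨i, hi, rfl⟩ := hmem y hy
    exact ⟨i, hi, rfl⟩

lemma octahedralCycle_mem_supportedOn (e : ℕ → E) (j : ℕ) :
    octahedralCycle e j ∈ Chain.supportedOn (IsOctahedralFacet e j) := by
  induction j with
  | zero => exact Chain.of_mem_supportedOn ⟨rfl, e, fun i => .inl rfl, by simp⟩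
  | succ j ih =>
    have hcone := Chain.cone_mem_supportedOn (e j) (fun _ => IsOctahedralFacet.cons) ih
    exact add_mem hcone (Chain.map_mem_supportedOn (fun _ => IsOctahedralFacet.map_neg) hcone)

lemma cone_octahedralCycle_mem_supportedOn (e : ℕ → E) (j : ℕ) :
    Chain.cone (e j) (octahedralCycle e j) ∈ Chain.supportedOn (IsOctahedralFacet e (j + 1)) :=
  Chain.cone_mem_supportedOn (e j) (fun _ => IsOctahedralFacet.cons)
    (octahedralCycle_mem_supportedOn e j)

/-- A list of labels in `{-n, …, n}`, sorted by decreasing absolute value, without complementary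
labels. In particular `0` is not a label. -/
def IsComplementFree (n : ℕ) (π : List ℤ) : Prop :=
  (∀ a ∈ π, |a| ≤ n) ∧ π.Pairwise (|·| ≥ |·|) ∧ ∀ a ∈ π, ∀ b ∈ π, a ≠ -b

lemma exists_octahedralFacet_notMem_supportedOn (e : ℕ → E) {T : Chain E →ₗ[ZMod 2] Chain ℤ}
    (T_nil : T (.of []) = .of []) (boundary_T : ∀ c, Chain.boundary (T c) = T (Chain.boundary c))
    (T_neg : ∀ c, T (.map Neg.neg c) = .map Neg.neg (T c)) (n : ℕ) :
    ∃ j ≤ n + 1, ∃ σ, IsOctahedralFacet e j σ ∧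
      T (.of σ) ∉ Chain.supportedOn fun π => π.length = j ∧ IsComplementFree n π := by
  classical
  by_contra! hfacet
  have hone : alternatingCount true (T (octahedralCycle e (n + 1))) = 1 := by
    refine alternatingCount_octahedralCycle e T_nil boundary_T T_neg (fun i hi => ?_) true
    refine Chain.supportedOn_mono ?_ (Chain.apply_mem_of_supportedOn (hfacet (i + 1) hi)
      (cone_octahedralCycle_mem_supportedOn e i))
    rintro π ⟨-, -, -, hne⟩ a ha rfl
    exact hne 0 ha 0 ha rfl
  refine one_ne_zero (hone.symm.trans (Chain.eq_zero_of_supportedOn ?_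
    (Chain.apply_mem_of_supportedOn (hfacet (n + 1) le_rfl)
      (octahedralCycle_mem_supportedOn e (n + 1)))))
  rintro (_ | ⟨a, π⟩) ⟨hlen, hle, hsort, hne⟩
  · simp at hlen
  refine (alternatingCount_of true _).trans (if_neg fun halt => ?_)
  have := halt.length_le_abs hsort hne
  have := hle a List.mem_cons_self
  omega

end Octahedral

section CrossPolytope

/-- The unit sphere of the `ℓ¹` norm, the boundary of the standard cross-polytope. -/
def crossPolytopeBoundary (m : ℕ) : Set (Fin m → ℝ) := {x | ∑ k, |x k| = 1}

variable {m : ℕ} {x : Fin m → ℝ}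

lemma norm_le_one_of_mem_crossPolytopeBoundary (hx : x ∈ crossPolytopeBoundary m) : ‖x‖ ≤ 1 :=
  (pi_norm_le_iff_of_nonneg zero_le_one).2 fun k => hx ▸
    Finset.single_le_sum (f := fun k => |x k|) (fun _ _ => abs_nonneg _) (Finset.mem_univ k)

lemma ne_zero_of_mem_crossPolytopeBoundary (hx : x ∈ crossPolytopeBoundary m) : x ≠ 0 := by
  rintro rfl
  simp [crossPolytopeBoundary] at hx

lemma isCompact_crossPolytopeBoundary : IsCompact (crossPolytopeBoundary m) :=
  (isCompact_closedBall (0 : Fin m → ℝ) 1).of_isClosed_subset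
    (isClosed_eq (by fun_prop) continuous_const)
    fun x hx => mem_closedBall_zero_iff.2 (norm_le_one_of_mem_crossPolytopeBoundary hx)

/-- The standard basis vectors of `ℝᵐ`, followed by zeros. -/
def basisVector (m i : ℕ) : Fin m → ℝ := fun k => if (k : ℕ) = i then 1 else 0

lemma convex_orthant_inter_hyperplane (s : Fin m → ℝ) :
    Convex ℝ {x : Fin m → ℝ | (∀ k, 0 ≤ s k * x k) ∧ ∑ k, s k * x k = 1} := by
  rintro x ⟨hx, hx'⟩ y ⟨hy, hy'⟩ a b ha hb hab
  have hcomb : ∀ k, s k * (a • x + b • y) k = a * (s k * x k) + b * (s k * y k) := fun k => by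
    simp only [Pi.add_apply, Pi.smul_apply, smul_eq_mul]
    ring
  refine ⟨fun k => hcomb k ▸ add_nonneg (mul_nonneg ha (hx k)) (mul_nonneg hb (hy k)), ?_⟩
  simp only [hcomb, Finset.sum_add_distrib, ← Finset.mul_sum, hx', hy', mul_one, hab]

lemma IsOctahedralFacet.convexHull_subset {j : ℕ} (hj : j ≤ m) {σ : List (Fin m → ℝ)}
    (hσ : IsOctahedralFacet (basisVector m) j σ) :
    convexHull ℝ {x | x ∈ σ} ⊆ crossPolytopeBoundary m := by
  obtain ⟨-, s, hs, hmem⟩ := hσ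
  set ε : Fin m → ℝ := fun k => s k k
  have hε : ∀ k, |ε k| = 1 := fun k => by
    rcases hs k with h | h <;> simp [ε, h, basisVector]
  have hcoord : ∀ i k, ε k * s i k = if (k : ℕ) = i then 1 else 0 := by
    intro i k
    split_ifs with hki
    · rw [← hki, ← abs_mul_abs_self, hε, one_mul]
    · rcases hs i with h | h <;> simp [h, basisVector, hki]
  have hface : convexHull ℝ {x | x ∈ σ} ⊆
      {x | (∀ k, 0 ≤ ε k * x k) ∧ ∑ k, ε k * x k = 1} := by
    refine convexHull_min (fun x hx => ?_) (convex_orthant_inter_hyperplane ε)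
    obtain ⟨i, hi, rfl⟩ := hmem x hx
    simp only [Set.mem_ofPred_eq, hcoord]
    refine ⟨fun k => by split_ifs <;> simp, ?_⟩
    rw [Finset.sum_eq_single ⟨i, hi.trans_le hj⟩ (fun k _ hk => if_neg fun h => hk (Fin.ext h))
      (by simp), if_pos rfl]
  intro x hx
  obtain ⟨hnonneg, hsum⟩ := hface hx
  rw [crossPolytopeBoundary, Set.mem_ofPred_eq, ← hsum]
  refine Finset.sum_congr rfl fun k _ => ?_
  rw [← abs_of_nonneg (hnonneg k), abs_mul, hε, one_mul]

end CrossPolytope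

section BorsukUlam

variable {n : ℕ}

/-- The index of an entry of maximal absolute value, chosen in such a way that opposite vectors
have the same index. -/
noncomputable def maxIndex [NeZero n] (y : Fin n → ℝ) : Fin n :=
  Classical.epsilon fun i => ‖y i‖ = ‖y‖

/-- The label of `y` in Tucker's sense: the number `maxIndex y + 1`, with the sign of the
corresponding entry. -/
noncomputable def tuckerLabel [NeZero n] (y : Fin n → ℝ) : ℤ :=
  SignType.sign (y (maxIndex y)) * (maxIndex y + 1)

section Label

variable [NeZero n] {x y : Fin n → ℝ}

lemma norm_apply_maxIndex (y : Fin n → ℝ) : ‖y (maxIndex y)‖ = ‖y‖ := by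
  obtain ⟨i, hi⟩ := Finite.exists_max fun i => ‖y i‖
  exact Classical.epsilon_spec (p := fun i => ‖y i‖ = ‖y‖)
    ⟨i, (norm_le_pi_norm y i).antisymm ((pi_norm_le_iff_of_nonneg (norm_nonneg _)).2 hi)⟩

lemma tuckerLabel_neg (y : Fin n → ℝ) : tuckerLabel (-y) = -tuckerLabel y := by
  have hindex : maxIndex (-y) = maxIndex y := by simp [maxIndex]
  simp [tuckerLabel, hindex, Left.sign_neg]

lemma abs_tuckerLabel_le (y : Fin n → ℝ) : |tuckerLabel y| ≤ n := by
  have hlt : ((maxIndex y : ℕ) : ℤ) + 1 ≤ n := by exact_mod_cast (maxIndex y).2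
  rw [tuckerLabel]
  rcases SignType.sign (y (maxIndex y)) <;> simp <;> grind

lemma norm_add_norm_le_dist_of_tuckerLabel_eq_neg (h : tuckerLabel x = -tuckerLabel y)
    (hx : x ≠ 0) : ‖x‖ + ‖y‖ ≤ dist x y := by
  have hx' : x (maxIndex x) ≠ 0 :=
    norm_ne_zero_iff.1 (norm_apply_maxIndex x ▸ norm_ne_zero_iff.2 hx)
  rw [← norm_apply_maxIndex x, ← norm_apply_maxIndex y, Real.norm_eq_abs, Real.norm_eq_abs]
  have hdist := dist_le_pi_dist x y (maxIndex x)
  rw [Real.dist_eq] at hdist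
  rw [tuckerLabel, tuckerLabel] at h
  have hindex : maxIndex y = maxIndex x ∧ x (maxIndex x) * y (maxIndex y) < 0 := by
    rcases lt_or_gt_of_ne hx' with hxi | hxi <;>
      rcases lt_trichotomy (y (maxIndex y)) 0 with hyi | hyi | hyi <;>
      simp only [sign_neg, sign_pos, hxi, hyi, sign_zero, SignType.coe_neg_one, SignType.coe_one,
        SignType.coe_zero] at h <;>
      first
      | omega
      | exact ⟨Fin.ext (by omega), by nlinarith⟩
  obtain ⟨hij, hneg⟩ := hindex
  rw [hij] at hneg ⊢
  refine le_trans (le_of_eq ?_) hdist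
  rcases mul_neg_iff.1 hneg with ⟨hxi, hyi⟩ | ⟨hxi, hyi⟩
  · rw [abs_of_pos hxi, abs_of_neg hyi, abs_of_pos (by linarith)]
    ring
  · rw [abs_of_neg hxi, abs_of_pos hyi, abs_of_neg (by linarith)]
    ring

end Label

/-- The chain map subdividing `M` times, labelling the vertices by `label`, and sorting the labels
by decreasing absolute value. -/
noncomputable def labelChain {E : Type*} [NormedAddCommGroup E] [NormedSpace ℝ E] (label : E → ℤ)
    (M : ℕ) : Chain E →ₗ[ZMod 2] Chain ℤ :=
  Chain.subdivide maxAbsEntry ∘ₗ Chain.map label ∘ₗ Chain.subdivide barycentre ^ M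

section LabelChain

variable {E : Type*} [NormedAddCommGroup E] [NormedSpace ℝ E] {label : E → ℤ}

lemma labelChain_nil (M : ℕ) : labelChain label M (.of []) = .of [] := by
  have hiter : (Chain.subdivide (barycentre (E := E)) ^ M) (.of []) = .of [] := by
    rw [Module.End.pow_apply]
    exact Function.iterate_fixed (Chain.subdivide_of_nil _) M
  simp [labelChain, hiter]

lemma boundary_labelChain (M : ℕ) (c : Chain E) :
    Chain.boundary (labelChain label M c) = labelChain label M (Chain.boundary c) := by
  have hiter : Chain.boundary ((Chain.subdivide barycentre ^ M) c) =
      (Chain.subdivide barycentre ^ M) (Chain.boundary c) := by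
    simp only [Module.End.pow_apply]
    exact Function.Semiconj.iterate_right (Chain.boundary_subdivide barycentre) M c
  simp only [labelChain, LinearMap.comp_apply, Chain.boundary_subdivide, Chain.boundary_map, hiter]

lemma labelChain_map_neg (hlabel : label.Odd) (M : ℕ) (c : Chain E) :
    labelChain label M (.map Neg.neg c) = .map Neg.neg (labelChain label M c) := by
  have hiter : (Chain.subdivide barycentre ^ M) (.map Neg.neg c) =
      .map Neg.neg ((Chain.subdivide barycentre ^ M) c) := by
    simp only [Module.End.pow_apply]
    exact (Function.Semiconj.iterate_right (Chain.map_subdivide _ neg_barycentre) M c).symm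
  have hmap : ∀ c : Chain E, .map label (.map Neg.neg c) = Chain.map Neg.neg (.map label c) :=
    LinearMap.congr_fun (f := Chain.map label ∘ₗ Chain.map Neg.neg)
      (g := Chain.map Neg.neg ∘ₗ Chain.map label)
      (Chain.linearMap_ext fun σ => by simp [Function.comp_def, hlabel _])
  simp only [labelChain, LinearMap.comp_apply, hiter, hmap,
    Chain.map_subdivide _ neg_maxAbsEntry]

lemma labelChain_of_mem_supportedOn {N : ℕ} (M : ℕ) {σ : List E} (hσ : σ.length ≤ N + 1) :
    labelChain label M (.of σ) ∈ Chain.supportedOn fun π => π.length = σ.length ∧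
      π.Pairwise (|·| ≥ |·|) ∧ ∃ ρ : List E, {x | x ∈ ρ} ⊆ convexHull ℝ {x | x ∈ σ} ∧
        Metric.diam {x | x ∈ ρ} ≤ (N / (N + 1)) ^ M * Metric.diam {x | x ∈ σ} ∧
        ∀ a ∈ π, ∃ x ∈ ρ, label x = a := by
  rw [labelChain, LinearMap.comp_apply, LinearMap.comp_apply, Module.End.pow_apply]
  refine Chain.apply_mem_of_supportedOn (f := Chain.subdivide maxAbsEntry ∘ₗ Chain.map label) ?_
    (iterate_subdivide_barycentre_mem_supportedOn M hσ)
  rintro ρ ⟨hlen, hsub, hdiam⟩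
  rw [LinearMap.comp_apply, Chain.map_of]
  refine Chain.supportedOn_mono ?_ (subdivide_maxAbsEntry_mem_supportedOn (ρ.map label))
  rintro π ⟨hlen', hsub', hsort⟩
  exact ⟨by simpa [hlen] using hlen', hsort, ρ, hsub, hdiam, fun a ha => List.mem_map.1 (hsub' ha)⟩

end LabelChain

/-- **Tucker's lemma**, in the form that odd nonzero labels `±1, …, ±n` on `ℝⁿ⁺¹ \ {0}` take
opposite values at arbitrarily close points of the cross-polytope. -/
theorem exists_label_eq_neg {label : (Fin (n + 1) → ℝ) → ℤ} (hodd : label.Odd)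
    (hle : ∀ x, |label x| ≤ n) {δ : ℝ} (hδ : 0 < δ) :
    ∃ x ∈ crossPolytopeBoundary (n + 1), ∃ y ∈ crossPolytopeBoundary (n + 1),
      dist x y < δ ∧ label x = -label y := by
  by_contra! hcompl
  obtain ⟨M, hM⟩ : ∃ M : ℕ, (n / (n + 1) : ℝ) ^ M < δ / 2 :=
    exists_pow_lt_of_lt_one (half_pos hδ) (by rw [div_lt_one] <;> linarith [n.cast_nonneg (α := ℝ)])
  obtain ⟨j, hj, σ, hσ, hnot⟩ := exists_octahedralFacet_notMem_supportedOn
    (basisVector (n + 1)) (labelChain_nil M) (boundary_labelChain M) (labelChain_map_neg hodd M) n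
  refine hnot (Chain.supportedOn_mono ?_ (labelChain_of_mem_supportedOn M (hσ.1.trans_le hj)))
  rintro π ⟨hlen, hsort, ρ, hsub, hdiam, hlabel⟩
  have hsphere := hσ.convexHull_subset hj
  have hdiam' : Metric.diam {x | x ∈ σ} ≤ 2 := by
    refine Metric.diam_le_of_forall_dist_le zero_le_two fun x hx y hy => ?_
    have hnorm := fun {z} (hz : z ∈ σ) =>
      norm_le_one_of_mem_crossPolytopeBoundary (hsphere (subset_convexHull ℝ _ hz))
    linarith [dist_le_norm_add_norm x y, hnorm hx, hnorm hy]
  refine ⟨hlen.trans hσ.1, fun a ha => ?_, hsort, fun a ha b hb => ?_⟩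
  · obtain ⟨x, -, rfl⟩ := hlabel a ha
    exact hle x
  · obtain ⟨x, hx, rfl⟩ := hlabel a ha
    obtain ⟨y, hy, rfl⟩ := hlabel b hb
    refine hcompl x (hsphere (hsub hx)) y (hsphere (hsub hy)) ?_
    calc dist x y ≤ Metric.diam {x | x ∈ ρ} :=
          Metric.dist_le_diam_of_mem ρ.finite_toSet.isBounded hx hy
      _ ≤ (n / (n + 1)) ^ M * 2 := hdiam.trans (by gcongr)
      _ < δ := by linarith

/-- **Borsuk–Ulam theorem** -/
theorem exists_ne_zero_and_eq_zero_of_odd {h : (Fin (n + 1) → ℝ) → (Fin n → ℝ)}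
    (hcont : ContinuousOn h {0}ᶜ) (hodd : ∀ x ≠ 0, h (-x) = -h x) : ∃ x ≠ 0, h x = 0 := by
  by_contra! hne
  rcases n.eq_zero_or_pos with rfl | hn
  · exact hne 1 one_ne_zero (Subsingleton.elim _ _)
  have : NeZero n := ⟨hn.ne'⟩
  have hcont' : ContinuousOn h (crossPolytopeBoundary (n + 1)) :=
    hcont.mono fun x hx => ne_zero_of_mem_crossPolytopeBoundary hx
  have hcompact := isCompact_crossPolytopeBoundary (m := n + 1)
  obtain ⟨ε, hε, hmin⟩ : ∃ ε > 0, ∀ x ∈ crossPolytopeBoundary (n + 1), ε ≤ ‖h x‖ :=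
    hcompact.exists_forall_le' hcont'.norm fun x hx =>
      norm_pos_iff.2 (hne x (ne_zero_of_mem_crossPolytopeBoundary hx))
  obtain ⟨δ, hδ, hclose⟩ := Metric.uniformContinuousOn_iff.1
    (hcompact.uniformContinuousOn_of_continuous hcont') ε hε
  have hodd' : Function.Odd fun x => tuckerLabel (Set.indicator {0}ᶜ h x) := fun x => by
    rcases eq_or_ne x 0 with rfl | hx
    · simp [tuckerLabel]
    · rw [← tuckerLabel_neg]
      simp [hx, hodd x hx]
  obtain ⟨x, hx, y, hy, hxy, hlabel⟩ := exists_label_eq_neg hodd' (fun x => abs_tuckerLabel_le _) hδ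
  have hx0 := ne_zero_of_mem_crossPolytopeBoundary hx
  have hy0 := ne_zero_of_mem_crossPolytopeBoundary hy
  simp only [Set.indicator_of_mem (Set.mem_compl_singleton_iff.2 hx0),
    Set.indicator_of_mem (Set.mem_compl_singleton_iff.2 hy0)] at hlabel
  have hfar := norm_add_norm_le_dist_of_tuckerLabel_eq_neg hlabel (hne x hx0)
  linarith [hclose x hx y hy hxy, hmin x hx, norm_nonneg (h y)]

end BorsukUlam

lemma subsingleton_homotopyGroup_of_leftInverse {N A X : Type*} [TopologicalSpace A]
    [TopologicalSpace X] {i : C(A, X)} {r : C(X, A)} (hri : Function.LeftInverse r i) (a : A)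
    [hX : Subsingleton (HomotopyGroup N X (i a))] : Subsingleton (HomotopyGroup N A a) := by
  refine ⟨fun p q => ?_⟩
  induction p using Quotient.inductionOn with | _ p => ?_
  induction q using Quotient.inductionOn with | _ q => ?_
  let push (s : GenLoop N A a) : GenLoop N X (i a) :=
    ⟨i.comp s.1, fun y hy => congrArg i (s.2 y hy)⟩
  have hpush : GenLoop.Homotopic (push p) (push q) :=
    Quotient.exact (hX.elim (Quotient.mk _ (push p)) (Quotient.mk _ (push q)))
  have pull_push (s : GenLoop N A a) : r.comp (push s).1 = s.1 := ContinuousMap.ext fun y => hri _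
  refine Quotient.sound ?_
  change p.1.HomotopicRel q.1 (Cube.boundary N)
  rw [← pull_push p, ← pull_push q]
  exact ContinuousMap.HomotopicRel.comp_continuousMap hpush r

section Extension

variable {N X : Type*} [Fintype N] [TopologicalSpace X]

/-- The map that collapses the boundary of the cube `‖(t, v)‖ ≤ 1`, except for the face `t = 1`,
to the negative `t`-axis, and stretches that face over the remaining directions. -/
noncomputable def collapse (x : ℝ × (N → ℝ)) : ℝ × (N → ℝ) :=
  (x.1 - 2 * ‖x.2‖, max 0 (min (1 - ‖x.2‖) (1 + x.1)) • x.2)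

lemma continuous_collapse : Continuous (collapse (N := N)) := by
  unfold collapse
  fun_prop

lemma collapse_eq_smul {x : ℝ × (N → ℝ)} (hx : ‖x‖ = 1) (hface : x.1 = -1 ∨ ‖x.2‖ = 1) :
    ∃ r > (0 : ℝ), collapse x = r • ((-1, 0) : ℝ × (N → ℝ)) := by
  have ht : x.1 ≤ 1 := (le_abs_self x.1).trans (hx ▸ norm_fst_le x)
  refine ⟨2 * ‖x.2‖ - x.1, ?_, ?_⟩
  · rcases hface with h | h <;> linarith [norm_nonneg x.2]
  · have hzero : max 0 (min (1 - ‖x.2‖) (1 + x.1)) = 0 := by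
      rcases hface with h | h <;> simp [h]
    ext <;> simp [collapse, hzero]

lemma lineMap_collapse_ne_zero {x : ℝ × (N → ℝ)} (hx : 1 ≤ ‖x‖) :
    AffineMap.lineMap (collapse x) x (min (‖x‖ - 1) 1) ≠ 0 := by
  obtain ⟨t, v⟩ := x
  set s := min (‖(t, v)‖ - 1) 1
  set μ := max 0 (min (1 - ‖v‖) (1 + t)) with hμ
  have hs : 0 ≤ s := le_min (sub_nonneg.2 hx) zero_le_one
  have hs1 : s ≤ 1 := min_le_right _ _
  intro hzero
  rw [AffineMap.lineMap_apply_module, collapse, Prod.ext_iff] at hzero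
  obtain ⟨hfst, hsnd⟩ := hzero
  replace hfst : t = 2 * (1 - s) * ‖v‖ := by
    simp only [Prod.fst_add, Prod.smul_fst, smul_eq_mul, Prod.fst_zero] at hfst
    linarith
  replace hsnd : ((1 - s) * μ + s) • v = 0 := by
    rw [add_smul, mul_smul]
    exact hsnd
  rcases smul_eq_zero.1 hsnd with hcoef | rfl
  · have hμ0 : 0 ≤ μ := le_max_left _ _
    have hs0 : s = 0 := by nlinarith [mul_nonneg (sub_nonneg.2 hs1) hμ0]
    have hnorm : ‖(t, v)‖ = 1 := by
      rcases min_choice (‖(t, v)‖ - 1) 1 with h | h <;> simp only [s, h] at hs0 <;> linarith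
    have ht : t ≤ 1 := (le_abs_self t).trans (hnorm ▸ norm_fst_le (t, v))
    have hpos : 0 < μ := by
      rw [hs0] at hfst
      exact lt_max_of_lt_right (lt_min (by linarith) (by linarith [norm_nonneg v]))
    rw [hs0] at hcoef
    linarith
  · have ht : t = 0 := by simpa using hfst
    rw [ht, Prod.mk_zero_zero, norm_zero] at hx
    linarith

lemma collapse_ne_zero {x : ℝ × (N → ℝ)} (hx : ‖x‖ = 1) : collapse x ≠ 0 := by
  simpa [hx] using lineMap_collapse_ne_zero hx.ge

lemma exists_continuous_eq_on_faces {x₀ : X} [hX : Subsingleton (HomotopyGroup N X x₀)]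
    {g : (N → ℝ) → X} (hg : ContinuousOn g (Metric.closedBall 0 1))
    (hg₀ : ∀ v, ‖v‖ = 1 → g v = x₀) :
    ∃ F : ℝ × (N → ℝ) → X, Continuous F ∧ (∀ v, ‖v‖ ≤ 1 → F (1, v) = g v) ∧
      (∀ v, F (-1, v) = x₀) ∧ ∀ t v, ‖v‖ = 1 → F (t, v) = x₀ := by
  let toBall (u : N → unitInterval) (i : N) : ℝ := 2 * u i - 1
  have norm_toBall_le (u) : ‖toBall u‖ ≤ 1 :=
    (pi_norm_le_iff_of_nonneg zero_le_one).2 fun i => abs_le.2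
      ⟨by linarith [(u i).2.1], by linarith [(u i).2.2]⟩
  let γ : GenLoop N X x₀ := ⟨⟨g ∘ toBall, hg.comp_continuous (by fun_prop) fun u => by
    simpa using norm_toBall_le u⟩, fun u ⟨i, hi⟩ => hg₀ _ <| by
      refine le_antisymm (norm_toBall_le u) (le_trans ?_ (norm_le_pi_norm (toBall u) i))
      rcases hi with hi | hi <;> norm_num [toBall, hi]⟩
  obtain ⟨H⟩ : GenLoop.Homotopic γ GenLoop.const :=
    Quotient.exact (hX.elim (Quotient.mk _ γ) (Quotient.mk _ GenLoop.const))
  let proj (s : ℝ) : unitInterval := Set.projIcc 0 1 zero_le_one ((1 + s) / 2)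
  have hproj : Continuous proj := continuous_projIcc.comp (by fun_prop)
  have proj_one : proj 1 = 1 := Set.projIcc_of_right_le _ (by norm_num)
  have proj_neg_one : proj (-1) = 0 := Set.projIcc_of_le_left _ (by norm_num)
  refine ⟨fun x => H (proj (-x.1), fun i => proj (x.2 i)), by fun_prop, fun v hv => ?_,
    fun v => ?_, fun t v hv => ?_⟩
  · have toBall_proj : toBall (fun i => proj (v i)) = v := funext fun i => by
      have hi := abs_le.1 ((norm_le_pi_norm v i).trans hv)
      simp only [toBall, proj]
      rw [Set.projIcc_of_mem _ ⟨by linarith, by linarith⟩]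
      ring
    simp only [proj_neg_one, H.apply_zero]
    exact congrArg g toBall_proj
  · simp only [neg_neg, proj_one, H.apply_one]
    rfl
  · obtain ⟨i, hi⟩ : ∃ i, |v i| = 1 := by
      by_contra! hne
      exact ((pi_norm_lt_iff zero_lt_one).2 fun i =>
        ((norm_le_pi_norm v i).trans hv.le).lt_of_ne (hne i)).ne hv
    have hboundary : (fun i => proj (v i)) ∈ Cube.boundary N := by
      refine ⟨i, ?_⟩
      rcases eq_or_eq_neg_of_abs_eq hi with hi | hi <;> simp [hi, proj_one, proj_neg_one]
    exact (H.eq_fst _ hboundary).trans (γ.2 _ hboundary)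

lemma exists_continuous_eq_comp_collapse {f : ℝ × (N → ℝ) → X} (hf : ContinuousOn f {0}ᶜ)
    (hom : ∀ r > (0 : ℝ), ∀ x, f (r • x) = f x) [Subsingleton (HomotopyGroup N X (f (-1, 0)))] :
    ∃ F : ℝ × (N → ℝ) → X, Continuous F ∧ ∀ x, ‖x‖ = 1 → F x = f (collapse x) := by
  have hside {x : ℝ × (N → ℝ)} (hx : ‖x‖ = 1) (hface : x.1 = -1 ∨ ‖x.2‖ = 1) :
      f (collapse x) = f (-1, 0) := by
    obtain ⟨r, hr, heq⟩ := collapse_eq_smul hx hface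
    rw [heq, hom r hr]
  have norm_face {v : N → ℝ} (hv : ‖v‖ ≤ 1) : ‖((1 : ℝ), v)‖ = 1 := by
    simpa [Prod.norm_def] using hv
  obtain ⟨F, hF, hF_face, hF_opposite, hF_side⟩ :=
    exists_continuous_eq_on_faces (g := fun v => f (collapse (1, v)))
      (hf.comp (continuous_collapse.comp (by fun_prop)).continuousOn fun v hv =>
        collapse_ne_zero (norm_face (by simpa using hv)))
      fun v hv => hside (norm_face hv.le) (Or.inr hv)
  refine ⟨F, hF, fun ⟨t, v⟩ hx => ?_⟩
  rcases max_choice ‖t‖ ‖v‖ with h | h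
  · rcases eq_or_eq_neg_of_abs_eq (h.symm.trans hx) with rfl | rfl
    · exact hF_face v ((norm_snd_le (1, v)).trans hx.le)
    · rw [hF_opposite, hside hx (Or.inl rfl)]
  · have hv : ‖v‖ = 1 := h.symm.trans hx
    rw [hF_side t v hv, hside hx (Or.inr hv)]

/-- Inside the annulus `1 ≤ ‖x‖ ≤ 2` the map `f` is deformed to `f ∘ collapse`, which extends over
the unit ball. -/
theorem exists_continuous_eq_of_two_le_norm {f : ℝ × (N → ℝ) → X} (hf : ContinuousOn f {0}ᶜ)
    (hom : ∀ r > (0 : ℝ), ∀ x, f (r • x) = f x) [Subsingleton (HomotopyGroup N X (f (-1, 0)))] :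
    ∃ F : ℝ × (N → ℝ) → X, Continuous F ∧ ∀ x, 2 ≤ ‖x‖ → F x = f x := by
  classical
  obtain ⟨F, hF, hFcollapse⟩ := exists_continuous_eq_comp_collapse hf hom
  refine ⟨fun x => if ‖x‖ ≤ 1 then F x
    else f (AffineMap.lineMap (collapse x) x (min (‖x‖ - 1) 1)), ?_, fun x hx => ?_⟩
  · refine continuous_if_le continuous_norm continuous_const hF.continuousOn ?_ fun x hx => ?_
    · exact hf.comp (continuous_collapse.lineMap continuous_id (by fun_prop)).continuousOn
        fun x hx => lineMap_collapse_ne_zero hx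
    · simp [hFcollapse x hx, hx]
  · dsimp only
    rw [if_neg (by linarith), min_eq_right (by linarith), AffineMap.lineMap_apply_one]

end Extension

section AntipodalMap

variable {E E' X : Type*} [NormedAddCommGroup E] [NormedSpace ℝ E] [NormedAddCommGroup E']
  [NormedSpace ℝ E'] [TopologicalSpace X] {τ : X → X}

/-- `f` is a map from the unit sphere of `E` to `X` that intertwines the antipodal map with `τ`,
encoded by its radial extension to `E \ {0}`. -/
structure IsAntipodalMap (τ : X → X) (f : E → X) : Prop where
  continuousOn : ContinuousOn f {0}ᶜ
  map_smul : ∀ r > (0 : ℝ), ∀ x, f (r • x) = f x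
  map_neg : ∀ x ≠ 0, f (-x) = τ (f x)

lemma IsAntipodalMap.comp_equiv {f : E → X} (hf : IsAntipodalMap τ f) (e : E' ≃L[ℝ] E) :
    IsAntipodalMap τ (f ∘ e) where
  continuousOn := hf.continuousOn.comp e.continuous.continuousOn fun x hx => by simpa using hx
  map_smul r hr x := by simp [hf.map_smul r hr]
  map_neg x hx := by simp [hf.map_neg (e x) (by simpa using hx)]

open Classical in
/-- The sphere of `ℝ × E` is the union of two copies of the ball of `E`; this is the antipodal map
given by `F` on the upper one. -/
noncomputable def suspension (τ : X → X) (f F : E → X) (x : ℝ × E) : X :=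
  if 0 < x.1 then F (x.1⁻¹ • x.2) else if x.1 < 0 then τ (F (x.1⁻¹ • x.2)) else f x.2

lemma suspension_eq_of_two_mul_abs_lt {f F : E → X} (hf : IsAntipodalMap τ f)
    (hFf : ∀ x, 2 ≤ ‖x‖ → F x = f x) {x : ℝ × E} (hx : 2 * |x.1| < ‖x.2‖) :
    suspension τ f F x = f x.2 := by
  obtain ⟨s, y⟩ := x
  have hy : y ≠ 0 := norm_pos_iff.1 ((by positivity : 0 ≤ 2 * |s|).trans_lt hx)
  have hfar (hs : s ≠ 0) : F (s⁻¹ • y) = f (s⁻¹ • y) := hFf _ <| by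
    rw [norm_smul, norm_inv, ← div_eq_inv_mul, le_div_iff₀ (norm_pos_iff.2 hs)]
    exact hx.le
  unfold suspension
  split_ifs with hpos hneg
  · rw [hfar hpos.ne', hf.map_smul _ (inv_pos.2 hpos)]
  · rw [hfar hneg.ne, ← hf.map_neg _ (smul_ne_zero (inv_ne_zero hneg.ne) hy), ← neg_smul,
      hf.map_smul _ (neg_pos.2 (inv_neg''.2 hneg))]
  · rfl

lemma isAntipodalMap_suspension {f F : E → X} (hf : IsAntipodalMap τ f)
    (hτ : Continuous τ) (hττ : Function.Involutive τ) (hF : Continuous F)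
    (hFf : ∀ x, 2 ≤ ‖x‖ → F x = f x) :
    IsAntipodalMap τ (suspension τ f F) where
  continuousOn := by
    rintro ⟨s, y⟩ hx
    refine ContinuousAt.continuousWithinAt ?_
    have hscale (hs : s ≠ 0) : ContinuousAt (fun x : ℝ × E => F (x.1⁻¹ • x.2)) (s, y) :=
      hF.continuousAt.comp ((continuousAt_fst.inv₀ hs).smul continuousAt_snd)
    rcases lt_trichotomy s 0 with hs | rfl | hs
    · refine (hτ.continuousAt.comp (hscale hs.ne)).congr ?_
      filter_upwards [continuousAt_fst.eventually_lt_const hs] with x hx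
      simp [suspension, hx, hx.not_gt]
    · have hy : y ≠ 0 := fun hy => hx (by simp [hy])
      have hcont : ContinuousAt (fun x : ℝ × E => f x.2) (0, y) :=
        (hf.continuousOn.continuousAt (isOpen_compl_singleton.mem_nhds hy)).comp continuousAt_snd
      refine hcont.congr ?_
      have hnear : ∀ᶠ x : ℝ × E in nhds (0, y), 2 * |x.1| < ‖x.2‖ :=
        ContinuousAt.eventually_lt (by fun_prop) (by fun_prop) (by simpa using hy)
      filter_upwards [hnear] with x hx using (suspension_eq_of_two_mul_abs_lt hf hFf hx).symm
    · refine (hscale hs.ne').congr ?_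
      filter_upwards [continuousAt_fst.eventually_const_lt hs] with x hx
      simp [suspension, hx]
  map_smul r hr x := by
    have hcancel : (r * x.1)⁻¹ • r • x.2 = x.1⁻¹ • x.2 := by
      rw [mul_inv_rev, smul_smul, mul_assoc, inv_mul_cancel₀ hr.ne', mul_one]
    have hneg : r * x.1 < 0 ↔ x.1 < 0 := by simp [mul_neg_iff, hr, hr.not_gt]
    simp only [suspension, Prod.smul_fst, Prod.smul_snd, smul_eq_mul, hcancel,
      mul_pos_iff_of_pos_left hr, hneg, hf.map_smul r hr]
  map_neg := by
    rintro ⟨s, y⟩ hx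
    rcases lt_trichotomy s 0 with hs | rfl | hs
    · simp [suspension, hs, hs.not_gt, hττ _, inv_neg]
    · have hy : y ≠ 0 := fun hy => hx (by simp [hy])
      simp [suspension, hf.map_neg y hy]
    · simp [suspension, hs, hs.not_gt, inv_neg]

theorem exists_isAntipodalMap [Nonempty X] (hτ : Continuous τ) (hττ : Function.Involutive τ) :
    ∀ n : ℕ, (∀ j < n, ∀ x : X, Subsingleton (HomotopyGroup (Fin j) X x)) →
      ∃ f : (Fin (n + 1) → ℝ) → X, IsAntipodalMap τ f
  | 0, _ => by
    obtain ⟨p⟩ := ‹Nonempty X›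
    have hf : IsAntipodalMap τ fun _ : Fin 0 → ℝ => p :=
      ⟨continuousOn_const, fun _ _ _ => rfl, fun x hx => absurd (Subsingleton.elim x 0) hx⟩
    exact ⟨_, (isAntipodalMap_suspension hf hτ hττ continuous_const fun _ _ => rfl).comp_equiv
      (Fin.consEquivL ℝ fun _ => ℝ).symm⟩
  | n + 1, hX => by
    obtain ⟨f, hf⟩ := exists_isAntipodalMap hτ hττ n fun j hj => hX j (hj.trans n.lt_succ_self)
    let e (m : ℕ) : (ℝ × (Fin m → ℝ)) ≃L[ℝ] (Fin (m + 1) → ℝ) := Fin.consEquivL ℝ fun _ => ℝ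
    have hfe := hf.comp_equiv (e n)
    have := hX n n.lt_succ_self ((f ∘ e n) (-1, 0))
    obtain ⟨F, hF, hFf⟩ := exists_continuous_eq_of_two_le_norm hfe.continuousOn hfe.map_smul
    exact ⟨_, (isAntipodalMap_suspension hfe hτ hττ hF hFf).comp_equiv
      ((e (n + 1)).symm.trans ((ContinuousLinearEquiv.refl ℝ ℝ).prodCongr (e n).symm))⟩

end AntipodalMap

section Realization

open Opposite

universe u

variable {K : SSet.{u}} {m n : SimplexCategory}

/-- The characteristic map of a simplex `σ` of `K` in the geometric realization of `K`. -/
noncomputable def charMap (σ : K.obj (op n)) :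
    C(stdSimplex ℝ (Fin (n.len + 1)), SSet.toTop.obj K) :=
  TopCat.toSSetObjEquiv _ _ ((sSetTopAdj.unit.app K).app (op n) σ)

lemma charMap_map (f : m ⟶ n) (σ : K.obj (op n)) (t : stdSimplex ℝ (Fin (m.len + 1))) :
    charMap (K.map f.op σ) t = charMap σ (stdSimplex.map f t) := by
  have hnat := ConcreteCategory.congr_hom ((sSetTopAdj.unit.app K).naturality f.op) σ
  exact congrArg (fun s => TopCat.toSSetObjEquiv _ _ s t) hnat

lemma toSSetObjEquiv_homEquiv {Z : TopCat.{u}} (g : SSet.toTop.obj K ⟶ Z) (σ : K.obj (op n)) :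
    TopCat.toSSetObjEquiv Z (op n) ((sSetTopAdj.homEquiv _ _ g).app (op n) σ) =
      g.hom.comp (charMap σ) := by
  rw [Adjunction.homEquiv_unit]
  rfl

theorem exists_continuousMap_comp_charMap {Z : Type u} [TopologicalSpace Z]
    (Φ : ∀ n : SimplexCategory, K.obj (op n) → C(stdSimplex ℝ (Fin (n.len + 1)), Z))
    (hΦ : ∀ {m n : SimplexCategory} (f : m ⟶ n) σ t,
      Φ m (K.map f.op σ) t = Φ n σ (stdSimplex.map f t)) :
    ∃ g : C(SSet.toTop.obj K, Z), ∀ {n} (σ : K.obj (op n)) t, g (charMap σ t) = Φ n σ t := by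
  let Ψ : K ⟶ TopCat.toSSet.obj (TopCat.of Z) :=
    { app Δ := ↾fun σ => (TopCat.toSSetObjEquiv (TopCat.of Z) Δ).symm (Φ Δ.unop σ)
      naturality Δ Δ' f := by
        ext σ
        refine (TopCat.toSSetObjEquiv (TopCat.of Z) Δ').injective ?_
        ext t
        exact hΦ f.unop σ t }
  let g := (sSetTopAdj.homEquiv K (TopCat.of Z)).symm Ψ
  refine ⟨g.hom, fun {n} σ t => ?_⟩
  have hg := toSSetObjEquiv_homEquiv g σ
  rw [Equiv.apply_symm_apply] at hg
  exact (DFunLike.congr_fun hg t).symm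

lemma hom_ext_charMap {Z : TopCat.{u}} {g g' : SSet.toTop.obj K ⟶ Z}
    (h : ∀ {n} (σ : K.obj (op n)), g.hom.comp (charMap σ) = g'.hom.comp (charMap σ)) : g = g' := by
  refine (sSetTopAdj.homEquiv _ _).injective ?_
  ext Δ σ
  refine (TopCat.toSSetObjEquiv Z Δ).injective ?_
  exact (toSSetObjEquiv_homEquiv g σ).trans ((h σ).trans (toSSetObjEquiv_homEquiv g' σ).symm)

theorem exists_charMap_eq (x : SSet.toTop.obj K) :
    ∃ (n : SimplexCategory) (σ : K.obj (op n)) (t : _), charMap σ t = x := by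
  -- Every map to an indiscrete space is continuous, so `hom_ext_charMap` applies to predicates.
  let Z : TopCat.{u} := TopCat.trivial.obj (ULift Prop)
  let covered : C(SSet.toTop.obj K, Z) :=
    ⟨fun y => ⟨∃ (n : SimplexCategory) (σ : K.obj (op n)) (t : _), charMap σ t = y⟩,
      continuous_top⟩
  let always : C(SSet.toTop.obj K, Z) := ⟨fun _ => ⟨True⟩, continuous_top⟩
  have heq : TopCat.ofHom covered = TopCat.ofHom always := hom_ext_charMap fun σ =>
    ContinuousMap.ext fun t => ULift.ext _ _ (eq_true ⟨_, σ, t, rfl⟩)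
  exact of_eq_true (congrArg ULift.down (ConcreteCategory.congr_hom heq x))

end Realization

section OrderComplex

open Opposite

universe u

variable {Q : Type u} [Preorder Q] {m n : SimplexCategory}

/-- The `i`-th vertex of a simplex of the order complex. -/
def vertex (σ : (nerve Q).obj (op n)) (i : Fin (n.len + 1)) : Q :=
  Functor.obj (C := Fin (n.len + 1)) σ i

lemma vertex_mono (σ : (nerve Q).obj (op n)) : Monotone (vertex σ) :=
  Functor.monotone (X := Fin (n.len + 1)) σ

lemma nerve_ext_vertex {σ σ' : (nerve Q).obj (op n)} (h : ∀ i, vertex σ i = vertex σ' i) : σ = σ' :=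
  nerve.ext_of_isThin (funext h)

lemma sum_map_smul {ι κ E : Type*} [Fintype ι] [Fintype κ] [AddCommGroup E] [Module ℝ E]
    (f : ι → κ) (t : stdSimplex ℝ ι) (v : κ → E) :
    ∑ j, stdSimplex.map f t j • v j = ∑ i, t i • v (f i) := by
  classical
  rw [← Finset.sum_fiberwise Finset.univ f]
  refine Finset.sum_congr rfl fun j _ => ?_
  rw [stdSimplex.map_coe, FunOnFinite.linearMap_apply_apply, Finset.sum_smul]
  refine Finset.sum_congr rfl fun i hi => ?_
  rw [(Finset.mem_filter.1 hi).2]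

theorem exists_continuousMap_eq_sum_smul {E : Type u} [AddCommGroup E] [Module ℝ E]
    [TopologicalSpace E] [ContinuousAdd E] [ContinuousSMul ℝ E] (s : Q → E) :
    ∃ g : C(SSet.toTop.obj (nerve Q), E), ∀ {n : SimplexCategory} (σ : (nerve Q).obj (op n)) t,
      g (charMap σ t) = ∑ i, t i • s (vertex σ i) :=
  exists_continuousMap_comp_charMap
    (fun _ σ => ⟨fun t => ∑ i, t i • s (vertex σ i), continuous_finsetSum _ fun i _ =>
      ((continuous_apply i).comp continuous_subtype_val).smul continuous_const⟩)
    fun f σ t => (sum_map_smul f t fun j => s (vertex σ j)).symm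

/-- The simplex with the vertices `c q`, in the reverse order, for `q` a vertex of `σ`. -/
def reflect {c : Q → Q} (hc : Antitone c) (σ : (nerve Q).obj (op n)) : (nerve Q).obj (op n) :=
  (hc.comp ((vertex_mono σ).comp_antitone Fin.rev_anti)).functor

lemma vertex_reflect {c : Q → Q} (hc : Antitone c) (σ : (nerve Q).obj (op n))
    (i : Fin (n.len + 1)) : vertex (reflect hc σ) i = c (vertex σ i.rev) := rfl

lemma reflect_reflect {c : Q → Q} (hc : Antitone c) (hcc : Function.Involutive c)
    (σ : (nerve Q).obj (op n)) : reflect hc (reflect hc σ) = σ :=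
  nerve_ext_vertex fun i => by rw [vertex_reflect, vertex_reflect, hcc, Fin.rev_rev]

lemma reflect_map {c : Q → Q} (hc : Antitone c) (f : m ⟶ n) (σ : (nerve Q).obj (op n)) :
    reflect hc ((nerve Q).map f.op σ) =
      (nerve Q).map (SimplexCategory.rev.map f).op (reflect hc σ) :=
  nerve_ext_vertex fun i =>
    congrArg (fun j => c (vertex σ j)) <|
      (Fin.rev_rev (f i.rev)).symm.trans
        (congrArg Fin.rev (SimplexCategory.rev_map_apply f i).symm)

theorem exists_involutive_charMap_reflect {c : Q → Q} (hc : Antitone c)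
    (hcc : Function.Involutive c) :
    ∃ τ : C(SSet.toTop.obj (nerve Q), SSet.toTop.obj (nerve Q)), Function.Involutive τ ∧
      ∀ {n : SimplexCategory} (σ : (nerve Q).obj (op n)) t,
        τ (charMap σ t) = charMap (reflect hc σ) (stdSimplex.map Fin.rev t) := by
  obtain ⟨τ, hτ⟩ := exists_continuousMap_comp_charMap
    (fun n σ => (charMap (reflect hc σ)).comp ⟨_, stdSimplex.continuous_map Fin.rev⟩)
    fun {m n} f σ t => by
      have hcomm : SimplexCategory.rev.map f ∘ Fin.rev = Fin.rev ∘ f := funext fun i =>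
        (SimplexCategory.rev_map_apply f i.rev).trans (by rw [Fin.rev_rev]; rfl)
      change charMap (reflect hc ((nerve Q).map f.op σ)) (stdSimplex.map Fin.rev t) =
        charMap (reflect hc σ) (stdSimplex.map Fin.rev (stdSimplex.map f t))
      rw [reflect_map, charMap_map]
      refine congrArg _ ?_
      exact (stdSimplex.map_comp_apply _ _ t).trans
        ((congrArg (stdSimplex.map · t) hcomm).trans (stdSimplex.map_comp_apply _ _ t).symm)
  refine ⟨τ, fun x => ?_, hτ⟩
  obtain ⟨n, σ, t, rfl⟩ := exists_charMap_eq x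
  rw [hτ, ContinuousMap.comp_apply, hτ, ContinuousMap.comp_apply, reflect_reflect hc hcc]
  have hrev : (Fin.rev ∘ Fin.rev : Fin (n.len + 1) → _) = id := funext Fin.rev_rev
  simp [stdSimplex.map_comp_apply, hrev]

theorem exists_leftInverse_realization {P : Type u} [Preorder P] {f : Q → P} {g : P → Q}
    (hf : Monotone f) (hg : Monotone g) (h : Function.LeftInverse g f) :
    ∃ (f' : C(SSet.toTop.obj (nerve Q), SSet.toTop.obj (nerve P)))
      (g' : C(SSet.toTop.obj (nerve P), SSet.toTop.obj (nerve Q))), Function.LeftInverse g' f' := by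
  refine ⟨(SSet.toTop.map (nerveMap hf.functor)).hom, (SSet.toTop.map (nerveMap hg.functor)).hom,
    fun x => ?_⟩
  have hcomp : nerveMap hf.functor ≫ nerveMap hg.functor = 𝟙 (nerve Q) := by
    ext Δ σ i
    exact h _
  have hid : SSet.toTop.map (nerveMap hf.functor) ≫ SSet.toTop.map (nerveMap hg.functor) = 𝟙 _ := by
    rw [← Functor.map_comp, hcomp, CategoryTheory.Functor.map_id]
  exact ConcreteCategory.congr_hom hid x

end OrderComplex

section BicliquePoset

universe u

variable {V : Type u} {G : SimpleGraph V}

/-- The maximal complete bipartite subgraphs of `G` with an ordered pair of nonempty sides, encoded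
as formal concepts of the adjacency relation and ordered by inclusion of the first sides. -/
abbrev BicliquePoset (G : SimpleGraph V) : Type u :=
  {q : Concept V V G.Adj // q.extent.Nonempty ∧ q.intent.Nonempty}

/-- The biclique with its two sides exchanged. -/
def swapSides (q : BicliquePoset G) : BicliquePoset G where
  val :=
    { extent := q.1.intent
      intent := q.1.extent
      upperPolar_extent := by
        rw [← q.1.lowerPolar_intent]
        exact Set.ext fun v => forall₂_congr fun w _ => G.adj_comm w v
      lowerPolar_intent := by
        rw [← q.1.upperPolar_extent]
        exact Set.ext fun v => forall₂_congr fun w _ => G.adj_comm v w }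
  property := q.2.symm

lemma antitone_swapSides : Antitone (swapSides (G := G)) :=
  fun _ _ h => Concept.intent_subset_intent_iff.2 h

lemma involutive_swapSides : Function.Involutive (swapSides (G := G)) := fun _ => rfl

open Classical in
/-- The vector whose entry at a colour is `1` if the colour occurs on the first side and `-1` if it
occurs on the second side. No colour occurs on both. -/
noncomputable def colourSign {ι : Type*} (C : G.Coloring ι) (q : BicliquePoset G) (i : ι) : ℝ :=
  (if i ∈ C '' q.1.extent then 1 else 0) - if i ∈ C '' q.1.intent then 1 else 0

lemma colourSign_swapSides {ι : Type*} (C : G.Coloring ι) (q : BicliquePoset G) :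
    colourSign C (swapSides q) = -colourSign C q :=
  funext fun _ => (neg_sub _ _).symm

lemma colourSign_of_mem_extent {ι : Type*} (C : G.Coloring ι) {q : BicliquePoset G} {v : V}
    (hv : v ∈ q.1.extent) : colourSign C q (C v) = 1 := by
  have hnot : C v ∉ C '' q.1.intent := by
    rintro ⟨w, hw, heq⟩
    exact C.valid (q.1.rel_extent_intent hv hw) heq.symm
  simp [colourSign, hnot, Set.mem_image_of_mem C hv]

theorem exists_odd_map_of_coloring {ι : Type u} (C : G.Coloring ι) :
    ∃ (τ : C(SSet.toTop.obj (nerve (BicliquePoset G)), SSet.toTop.obj (nerve (BicliquePoset G))))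
      (g : C(SSet.toTop.obj (nerve (BicliquePoset G)), ι → ℝ)), Function.Involutive τ ∧
      (∀ x, g (τ x) = -g x) ∧ ∀ x, ∃ i, g x i = 1 := by
  obtain ⟨τ, hττ, hτ⟩ := exists_involutive_charMap_reflect (antitone_swapSides (G := G))
    involutive_swapSides
  obtain ⟨g, hg⟩ := exists_continuousMap_eq_sum_smul (colourSign C)
  refine ⟨τ, g, hττ, fun x => ?_, fun x => ?_⟩ <;> obtain ⟨n, σ, t, rfl⟩ := exists_charMap_eq x
  · rw [hτ, hg, hg, sum_map_smul Fin.rev t fun i => colourSign C (vertex _ i)]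
    simp [vertex_reflect, colourSign_swapSides]
  · obtain ⟨v, hv⟩ := (vertex σ 0).2.1
    have hmem (i) : v ∈ (vertex σ i).1.extent :=
      Concept.extent_subset_extent_iff.2 (vertex_mono σ (Fin.zero_le i)) hv
    refine ⟨C v, ?_⟩
    simp [hg, colourSign_of_mem_extent C (hmem _)]

end BicliquePoset

section NbhdPoset

lemma sub_last_ne_zero {n : ℕ} {v : Fin (n + 1) → ℝ} {i j : Fin (n + 1)} (hij : v i ≠ v j) :
    (fun l : Fin n => v l.castSucc - v (Fin.last n)) ≠ 0 := fun hzero => by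
  have hconst (l) : v l = v (Fin.last n) := by
    rcases Fin.eq_castSucc_or_eq_last l with ⟨l, rfl⟩ | rfl
    · exact sub_eq_zero.1 (congrFun hzero l)
    · rfl
  exact hij ((hconst i).trans (hconst j).symm)

variable {V : Type} {G : SimpleGraph V}

/-- The smallest biclique whose first side contains a given set with a common neighbour. -/
def generatedBiclique (A : NbhdPoset G) : BicliquePoset G where
  val := Concept.ofObjects G.Adj (A.1 : Set V)
  property := by
    obtain ⟨v, hv⟩ := A.2.2
    exact ⟨A.2.1.to_set.mono (subset_lowerPolar_upperPolar G.Adj _), v, fun a ha => (hv a ha).symm⟩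

lemma monotone_generatedBiclique : Monotone (generatedBiclique (G := G)) := fun _ _ h =>
  Concept.intent_subset_intent_iff.1 (upperPolar_anti G.Adj (Finset.coe_subset.2 h))

variable [G.LocallyFinite]

lemma finite_extent (q : BicliquePoset G) : q.1.extent.Finite := by
  obtain ⟨w, hw⟩ := q.2.2
  exact (G.neighborSet w).toFinite.subset fun v hv => (q.1.rel_extent_intent hv hw).symm

/-- The first side of a biclique. -/
noncomputable def firstSide (q : BicliquePoset G) : NbhdPoset G :=
  ⟨(finite_extent q).toFinset, by simpa using q.2.1, by
    obtain ⟨w, hw⟩ := q.2.2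
    exact ⟨w, fun v hv => (q.1.rel_extent_intent (by simpa using hv) hw).symm⟩⟩

lemma monotone_firstSide : Monotone (firstSide (G := G)) := fun _ _ h =>
  Set.Finite.toFinset_subset_toFinset.2 (Concept.extent_subset_extent_iff.2 h)

lemma leftInverse_generatedBiclique_firstSide :
    Function.LeftInverse generatedBiclique (firstSide (G := G)) :=
  fun q => Subtype.ext (by simp [generatedBiclique, firstSide])

theorem not_colorable_of_subsingleton_homotopyGroup {n : ℕ} (hne : Nonempty (nbhdComplex G))
    (hX : ∀ j < n, ∀ x : nbhdComplex G, Subsingleton (HomotopyGroup (Fin j) (nbhdComplex G) x)) :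
    ¬ G.Colorable (n + 1) := by
  rintro ⟨C⟩
  obtain ⟨incl, retr, hretr⟩ := exists_leftInverse_realization monotone_firstSide
    (monotone_generatedBiclique (G := G)) leftInverse_generatedBiclique_firstSide
  obtain ⟨τ, g, hττ, hodd, hone⟩ := exists_odd_map_of_coloring C
  have : Nonempty (SSet.toTop.obj (nerve (BicliquePoset G))) := hne.map retr
  obtain ⟨f, hf⟩ := exists_isAntipodalMap τ.continuous hττ n fun j hj x =>
    have : Subsingleton (HomotopyGroup (Fin j) _ (incl x)) := hX j hj (incl x)
    subsingleton_homotopyGroup_of_leftInverse hretr x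
  have hdiff : Continuous fun y (l : Fin n) => g y l.castSucc - g y (Fin.last n) := by fun_prop
  obtain ⟨x, -, hzero⟩ := exists_ne_zero_and_eq_zero_of_odd
      (hdiff.comp_continuousOn hf.continuousOn) fun x hx => by
    ext l
    simp only [Function.comp_apply, hf.map_neg x hx, hodd, Pi.neg_apply]
    ring
  obtain ⟨i, hi⟩ := hone (f x)
  obtain ⟨j, hj⟩ := hone (τ (f x))
  rw [hodd, Pi.neg_apply] at hj
  exact sub_last_ne_zero (i := i) (j := j) (by linarith) hzero

end NbhdPoset

end Lovasz

theorem lovasz_neighborhood_complex_general {V : Type} (G : SimpleGraph V) [G.LocallyFinite]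
    (k : ℤ) (hk : -1 ≤ k) (hconn : KConnected k (nbhdComplex G)) :
    ((k + 3).toNat : ℕ∞) ≤ G.chromaticNumber := by
  obtain ⟨n, rfl⟩ : ∃ n : ℕ, k = n - 1 := ⟨(k + 1).toNat, by omega⟩
  rw [SimpleGraph.le_chromaticNumber_iff_colorable]
  intro m hm
  by_contra! hlt
  have hmn : m ≤ n + 1 := by
    have := Nat.cast_lt.1 hlt
    omega
  exact Lovasz.not_colorable_of_subsingleton_homotopyGroup hconn.1
    (fun j hj => hconn.2 j (by omega)) (hm.mono hmn)

/-- **Lovász' theorem**: if the neighborhood complex of a finite simple graph `G` is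
`k`-connected for some integer `k ≥ -1`, then `χ(G) ≥ k + 3`. -/
theorem lovasz_neighborhood_complex {V : Type} [Fintype V] (G : SimpleGraph V)
    (k : ℤ) (hk : -1 ≤ k) (hconn : KConnected k (nbhdComplex G)) :
    ((k + 3).toNat : ℕ∞) ≤ G.chromaticNumber := by
  classical exact lovasz_neighborhood_complex_general G k hk hconn
end
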